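/- arXiv:1708.02521 — 4 statements merged into one kernel-verified Lean document; each statement's English description precedes it below -/
import Mathlib

section
/- For every n ≥ 1, E[(max_{1≤l≤n} l^{−1}|S_l|)²] ≤ 16 (σ_h² − 2σ_w²) Σ_{i=1}^n i^{−1}; consequently E[(max_{1≤l≤n} l^{−1}|S_l|)²] ≤ 16 (σ_h² − 2σ_w²) log(3n). -/
open MeasureTheory ProbabilityTheory

/-!
For a degenerate kernel `Δ` the sums `S_l` form a martingale, whose increments
`D_k = ∑_{i<k} Δ(X_i, X_k)` satisfy `E D_k² = k E Δ²` because distinct summands are uncorrelated.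
The weights `l⁻¹` are moved inside the martingale: with `Y_l = ∑_{k<l} D_k / (k + 1)`, summation by
parts gives `l⁻¹ |S_l| ≤ 2 max_{k≤l} |Y_k|`. Doob's `L²` maximal inequality for `Y` costs a second
factor `4`, and `E Y_n² = ∑ E D_k² / (k + 1)² ≤ E Δ² ∑ i⁻¹` by orthogonality of the increments.
Finally `E Δ² = σ_h² - 2 σ_w²`, as `Δ` is orthogonal to functions of a single variable.
-/

section Deterministic

open Finset

/-- Pathwise form of Doob's `L²` inequality: for a nonnegative submartingale the subtracted sum has
nonnegative expectation. -/
lemma partialSups_sq_le_sub_sum_mul_sub (z : ℕ → ℝ) (n : ℕ) :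
    partialSups z n ^ 2 ≤
      4 * z n ^ 2 - 4 * ∑ k ∈ range n, partialSups z k * (z (k + 1) - z k) := by
  suffices 2 * ∑ k ∈ range n, partialSups z k * (z (k + 1) - z k) + partialSups z n ^ 2 ≤
      2 * partialSups z n * z n by
    linarith [sq_nonneg (partialSups z n - 2 * z n)]
  induction n with
  | zero => simp only [range_zero, sum_empty, partialSups_zero]; nlinarith [sq_nonneg (z 0)]
  | succ n ih =>
    rw [sum_range_succ, show partialSups z (n + 1) = partialSups z n ⊔ z (n + 1) from
      partialSups_succ z n]
    rcases le_total (partialSups z n) (z (n + 1)) with hle | hge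
    · rw [sup_eq_right.mpr hle]
      nlinarith [sq_nonneg (partialSups z n - z (n + 1))]
    · rw [sup_eq_left.mpr hge]
      nlinarith

lemma sum_mul_sub_eq_sub_sum_sub_mul (b y : ℕ → ℝ) (n : ℕ) :
    ∑ k ∈ range n, b (k + 1) * (y (k + 1) - y k) =
      b n * y n - b 0 * y 0 - ∑ k ∈ range n, (b (k + 1) - b k) * y k := by
  induction n with
  | zero => simp
  | succ n ih => rw [sum_range_succ, sum_range_succ, ih]; ring

lemma abs_sum_mul_sub_le {b : ℕ → ℝ} (hb : Monotone b) (hb₀ : 0 ≤ b 0) (y : ℕ → ℝ) (n : ℕ) :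
    |∑ k ∈ range n, b (k + 1) * (y (k + 1) - y k)| ≤ 2 * b n * partialSups (|y ·|) n := by
  set M := partialSups (|y ·|) n
  have hyM {k : ℕ} (hk : k ≤ n) : |y k| ≤ M := le_partialSups_of_le (|y ·|) hk
  have hbn : 0 ≤ b n := hb₀.trans (hb n.zero_le)
  have hsum : |∑ k ∈ range n, (b (k + 1) - b k) * y k| ≤ (b n - b 0) * M := by
    rw [← sum_range_sub b n, sum_mul]
    refine (abs_sum_le_sum_abs _ _).trans (sum_le_sum fun k hk => ?_)
    have hbk : 0 ≤ b (k + 1) - b k := sub_nonneg.mpr (hb k.le_succ)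
    rw [abs_mul, abs_of_nonneg hbk]
    exact mul_le_mul_of_nonneg_left (hyM (mem_range.mp hk).le) hbk
  calc |∑ k ∈ range n, b (k + 1) * (y (k + 1) - y k)|
      ≤ |b n * y n| + |b 0 * y 0| + |∑ k ∈ range n, (b (k + 1) - b k) * y k| := by
        rw [sum_mul_sub_eq_sub_sum_sub_mul]
        exact (abs_sub _ _).trans (add_le_add_left (abs_sub _ _) _)
    _ ≤ b n * M + b 0 * M + (b n - b 0) * M := by
        rw [abs_mul, abs_mul, abs_of_nonneg hbn, abs_of_nonneg hb₀]
        gcongr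
        exacts [hyM le_rfl, hyM n.zero_le]
    _ = 2 * b n * M := by ring

lemma sup'_abs_sub_div_le {b : ℕ → ℝ} (hb : Monotone b) (hb₀ : 0 ≤ b 0) (hb₁ : 0 < b 1)
    (s : ℕ → ℝ) {n : ℕ} (hn : 1 ≤ n) :
    ((Icc 1 n).sup' (nonempty_Icc.mpr hn) fun l => |s l - s 0| / b l) ≤
      2 * partialSups (fun l => |∑ k ∈ range l, (b (k + 1))⁻¹ * (s (k + 1) - s k)|) n := by
  set y : ℕ → ℝ := fun l => ∑ k ∈ range l, (b (k + 1))⁻¹ * (s (k + 1) - s k)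
  have hb_pos {k : ℕ} (hk : 1 ≤ k) : 0 < b k := hb₁.trans_le (hb hk)
  have hs_eq (l : ℕ) : s l - s 0 = ∑ k ∈ range l, b (k + 1) * (y (k + 1) - y k) := by
    rw [← sum_range_sub]
    refine sum_congr rfl fun k _ => ?_
    rw [show y (k + 1) - y k = (b (k + 1))⁻¹ * (s (k + 1) - s k) from sum_range_succ_sub_sum _,
      mul_inv_cancel_left₀ (hb_pos (Nat.le_add_left 1 k)).ne']
  refine sup'_le _ _ fun l hl => ?_
  obtain ⟨hl₁, hln⟩ := mem_Icc.mp hl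
  rw [div_le_iff₀ (hb_pos hl₁), hs_eq, mul_right_comm]
  refine (abs_sum_mul_sub_le hb hb₀ y l).trans ?_
  gcongr
  exact mul_nonneg zero_le_two (hb_pos hl₁).le

end Deterministic

section Martingale

open Finset

variable {Ω : Type*} {m₀ : MeasurableSpace Ω} {μ : Measure Ω}

lemma memLp_partialSups {p : ENNReal} {f : ℕ → Ω → ℝ} (hf : ∀ k, MemLp (f k) p μ) (n : ℕ) :
    MemLp (partialSups f n) p μ := by
  rw [partialSups_apply]
  exact sup'_induction (p := fun g => MemLp g p μ) _ _ (fun _ h _ h' => h.sup h') fun k _ => hf k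

lemma integral_mul_eq_integral_mul_condExp {m : MeasurableSpace Ω} (hm : m ≤ m₀)
    [SigmaFinite (μ.trim hm)] {f g : Ω → ℝ} (hg : StronglyMeasurable[m] g)
    (hgf : Integrable (g * f) μ) (hf : Integrable f μ) :
    ∫ ω, g ω * f ω ∂μ = ∫ ω, g ω * (μ[f | m]) ω ∂μ := by
  rw [← integral_condExp hm (f := fun ω => g ω * f ω)]
  exact integral_congr_ae (condExp_mul_of_stronglyMeasurable_left hg hgf hf)

variable {ℱ : Filtration ℕ m₀} {f : ℕ → Ω → ℝ}

lemma submartingale_abs_of_martingale (hf : Martingale f ℱ μ) :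
    Submartingale (fun k => |f k|) ℱ μ :=
  hf.submartingale.sup hf.neg.submartingale

lemma condExp_sub_eq_zero_of_martingale [SigmaFiniteFiltration μ ℱ] (hf : Martingale f ℱ μ)
    (k : ℕ) : μ[f (k + 1) - f k | ℱ k] =ᵐ[μ] 0 := by
  filter_upwards [condExp_sub (hf.integrable (k + 1)) (hf.integrable k) (ℱ k),
    hf.condExp_ae_eq k.le_succ, hf.condExp_ae_eq le_rfl] with ω hsub hsucc hself
  rw [hsub, Pi.sub_apply, hsucc, hself, sub_self, Pi.zero_apply]

variable [IsFiniteMeasure μ]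

lemma stronglyAdapted_partialSups (hf : StronglyAdapted ℱ f) :
    StronglyAdapted ℱ (partialSups f) := fun n => by
  rw [partialSups_apply]
  exact sup'_induction (p := fun g => StronglyMeasurable[ℱ n] g) _ _
    (fun _ h _ h' => @StronglyMeasurable.sup _ _ _ _ (ℱ n) _ _ _ h h')
    fun k hk => (hf k).mono (ℱ.mono (mem_Iic.mp hk))

theorem integral_partialSups_sq_le_of_submartingale (hf : Submartingale f ℱ μ) (hf₀ : 0 ≤ f)
    (hf₂ : ∀ k, MemLp (f k) 2 μ) (n : ℕ) :
    ∫ ω, partialSups f n ω ^ 2 ∂μ ≤ 4 * ∫ ω, f n ω ^ 2 ∂μ := by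
  have hM₂ := memLp_partialSups hf₂
  have hM₀ (k : ℕ) : 0 ≤ partialSups f k := (hf₀ k).trans (le_partialSups f k)
  have hint (k : ℕ) : Integrable (fun ω => partialSups f k ω * (f (k + 1) ω - f k ω)) μ :=
    (hM₂ k).integrable_mul ((hf₂ (k + 1)).sub (hf₂ k))
  have hgain (k : ℕ) : 0 ≤ ∫ ω, partialSups f k ω * (f (k + 1) ω - f k ω) ∂μ := by
    refine (integral_nonneg_of_ae ?_).trans_eq (integral_mul_eq_integral_mul_condExp (ℱ.le k)
      (stronglyAdapted_partialSups hf.stronglyAdapted k) (hint k)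
      ((hf.integrable _).sub (hf.integrable _))).symm
    filter_upwards [hf.condExp_sub_nonneg k.le_succ] with ω hω
    exact mul_nonneg (hM₀ k ω) hω
  have hpath (ω : Ω) : partialSups f n ω ^ 2 ≤ 4 * f n ω ^ 2 -
      4 * ∑ k ∈ range n, partialSups f k ω * (f (k + 1) ω - f k ω) := by
    simp only [Pi.partialSups_apply]
    exact partialSups_sq_le_sub_sum_mul_sub (f · ω) n
  have hf_int : Integrable (fun ω => 4 * f n ω ^ 2) μ := (hf₂ n).integrable_sq.const_mul 4
  have hsum_int := (integrable_finsetSum (range n) fun k _ => hint k).const_mul 4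
  calc ∫ ω, partialSups f n ω ^ 2 ∂μ
      ≤ ∫ ω, 4 * f n ω ^ 2 -
          4 * ∑ k ∈ range n, partialSups f k ω * (f (k + 1) ω - f k ω) ∂μ :=
        integral_mono (hM₂ n).integrable_sq (hf_int.sub hsum_int) hpath
    _ = 4 * ∫ ω, f n ω ^ 2 ∂μ -
          4 * ∑ k ∈ range n, ∫ ω, partialSups f k ω * (f (k + 1) ω - f k ω) ∂μ := by
        rw [integral_sub hf_int hsum_int, integral_const_mul, integral_const_mul,
          integral_finsetSum _ fun k _ => hint k]
    _ ≤ 4 * ∫ ω, f n ω ^ 2 ∂μ := by linarith [sum_nonneg fun k (_ : k ∈ range n) => hgain k]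

theorem integral_partialSups_abs_sq_le_of_martingale (hf : Martingale f ℱ μ)
    (hf₂ : ∀ k, MemLp (f k) 2 μ) (n : ℕ) :
    ∫ ω, partialSups (fun k => |f k ω|) n ^ 2 ∂μ ≤ 4 * ∫ ω, f n ω ^ 2 ∂μ := by
  simpa only [Pi.partialSups_apply, Pi.abs_apply, sq_abs] using
    integral_partialSups_sq_le_of_submartingale (submartingale_abs_of_martingale hf)
      (fun k => abs_nonneg (f k)) (fun k => (hf₂ k).abs) n

lemma integral_sq_succ_of_martingale (hf : Martingale f ℱ μ) (hf₂ : ∀ k, MemLp (f k) 2 μ)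
    (k : ℕ) :
    ∫ ω, f (k + 1) ω ^ 2 ∂μ = ∫ ω, f k ω ^ 2 ∂μ + ∫ ω, (f (k + 1) ω - f k ω) ^ 2 ∂μ := by
  have hd₂ : MemLp (fun ω => f (k + 1) ω - f k ω) 2 μ := (hf₂ (k + 1)).sub (hf₂ k)
  have hsq_int : Integrable (fun ω => f k ω ^ 2 + (f (k + 1) ω - f k ω) ^ 2) μ :=
    (hf₂ k).integrable_sq.add hd₂.integrable_sq
  have hcross_int : Integrable (fun ω => f k ω * (f (k + 1) ω - f k ω)) μ :=
    (hf₂ k).integrable_mul hd₂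
  have hcross : ∫ ω, f k ω * (f (k + 1) ω - f k ω) ∂μ = 0 := by
    refine (integral_mul_eq_integral_mul_condExp (ℱ.le k) (hf.stronglyMeasurable k) hcross_int
      ((hf.integrable _).sub (hf.integrable _))).trans (integral_eq_zero_of_ae ?_)
    filter_upwards [condExp_sub_eq_zero_of_martingale hf k] with ω hω
    exact mul_eq_zero_of_right _ hω
  calc ∫ ω, f (k + 1) ω ^ 2 ∂μ
      = ∫ ω, (f k ω ^ 2 + (f (k + 1) ω - f k ω) ^ 2) +
          2 * (f k ω * (f (k + 1) ω - f k ω)) ∂μ := by congr with ω; ring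
    _ = ∫ ω, f k ω ^ 2 ∂μ + ∫ ω, (f (k + 1) ω - f k ω) ^ 2 ∂μ := by
        rw [integral_add hsq_int (hcross_int.const_mul 2),
          integral_add (hf₂ k).integrable_sq hd₂.integrable_sq, integral_const_mul, hcross,
          mul_zero, add_zero]

theorem integral_sq_eq_add_sum_of_martingale (hf : Martingale f ℱ μ)
    (hf₂ : ∀ k, MemLp (f k) 2 μ) (n : ℕ) :
    ∫ ω, f n ω ^ 2 ∂μ =
      ∫ ω, f 0 ω ^ 2 ∂μ + ∑ k ∈ range n, ∫ ω, (f (k + 1) ω - f k ω) ^ 2 ∂μ := by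
  induction n with
  | zero => simp
  | succ n ih => rw [integral_sq_succ_of_martingale hf hf₂, ih, sum_range_succ, add_assoc]

lemma martingale_sum_smul_sub (hf : Martingale f ℱ μ) (c : ℕ → ℝ) :
    Martingale (fun n => ∑ k ∈ range n, c k • (f (k + 1) - f k)) ℱ μ := by
  refine martingale_of_condExp_sub_eq_zero_nat (fun n => ?_) (fun n => ?_) fun n => ?_
  · refine Finset.stronglyMeasurable_sum _ fun k hk => StronglyMeasurable.const_smul ?_ _
    have hkn := mem_range.mp hk
    exact ((hf.stronglyMeasurable _).mono (ℱ.mono hkn)).sub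
      ((hf.stronglyMeasurable _).mono (ℱ.mono hkn.le))
  · exact integrable_finsetSum' _ fun k _ =>
      ((hf.integrable (k + 1)).sub (hf.integrable k)).smul (c k)
  · rw [sum_range_succ, add_sub_cancel_left]
    filter_upwards [condExp_smul (c n) (f (n + 1) - f n) (ℱ n),
      condExp_sub_eq_zero_of_martingale hf n] with ω hsmul hsub
    rw [hsmul, Pi.smul_apply, hsub, Pi.zero_apply, smul_zero]

theorem integral_sup'_abs_sub_div_sq_le_of_martingale (hf : Martingale f ℱ μ)
    (hf₂ : ∀ k, MemLp (f k) 2 μ) {b : ℕ → ℝ} (hb : Monotone b) (hb₀ : 0 ≤ b 0) (hb₁ : 0 < b 1)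
    {n : ℕ} (hn : 1 ≤ n) :
    ∫ ω, ((Icc 1 n).sup' (nonempty_Icc.mpr hn) fun l => |f l ω - f 0 ω| / b l) ^ 2 ∂μ ≤
      16 * ∑ k ∈ range n, (∫ ω, (f (k + 1) ω - f k ω) ^ 2 ∂μ) / b (k + 1) ^ 2 := by
  let y (l : ℕ) : Ω → ℝ := ∑ k ∈ range l, (b (k + 1))⁻¹ • (f (k + 1) - f k)
  have hy : Martingale y ℱ μ := martingale_sum_smul_sub hf _
  have hy₂ (l : ℕ) : MemLp (y l) 2 μ :=
    memLp_finsetSum' _ fun k _ => ((hf₂ (k + 1)).sub (hf₂ k)).const_smul _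
  have hy_succ (k : ℕ) (ω : Ω) :
      y (k + 1) ω - y k ω = (b (k + 1))⁻¹ * (f (k + 1) ω - f k ω) :=
    congrFun (sum_range_succ_sub_sum fun k => (b (k + 1))⁻¹ • (f (k + 1) - f k)) ω
  have hsup (ω : Ω) : ((Icc 1 n).sup' (nonempty_Icc.mpr hn) fun l => |f l ω - f 0 ω| / b l) ≤
      2 * partialSups (fun k => |y k ω|) n := by
    simpa only [y, Finset.sum_apply, Pi.smul_apply, Pi.sub_apply, smul_eq_mul] using
      sup'_abs_sub_div_le hb hb₀ hb₁ (f · ω) hn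
  have hsup₀ (ω : Ω) :
      0 ≤ (Icc 1 n).sup' (nonempty_Icc.mpr hn) fun l => |f l ω - f 0 ω| / b l :=
    (div_nonneg (abs_nonneg _) hb₁.le).trans
      (le_sup' (fun l => |f l ω - f 0 ω| / b l) (mem_Icc.mpr ⟨le_rfl, hn⟩))
  have hmax_int : Integrable (fun ω => partialSups (fun k => |y k ω|) n ^ 2) μ := by
    simpa only [Pi.partialSups_apply, Pi.abs_apply] using
      (memLp_partialSups (fun k => (hy₂ k).abs) n).integrable_sq
  calc ∫ ω, ((Icc 1 n).sup' (nonempty_Icc.mpr hn) fun l => |f l ω - f 0 ω| / b l) ^ 2 ∂μ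
      ≤ ∫ ω, 4 * partialSups (fun k => |y k ω|) n ^ 2 ∂μ := by
        refine integral_mono_of_nonneg (.of_forall fun _ => sq_nonneg _) (hmax_int.const_mul 4)
          (.of_forall fun ω => ?_)
        exact (pow_le_pow_left₀ (hsup₀ ω) (hsup ω) 2).trans_eq (by ring)
    _ ≤ 16 * ∫ ω, y n ω ^ 2 ∂μ := by
        rw [integral_const_mul]
        linarith [integral_partialSups_abs_sq_le_of_martingale hy hy₂ n]
    _ = 16 * ∑ k ∈ range n, (∫ ω, (f (k + 1) ω - f k ω) ^ 2 ∂μ) / b (k + 1) ^ 2 := by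
        have hy_zero : y 0 = 0 := sum_range_zero _
        simp only [integral_sq_eq_add_sum_of_martingale hy hy₂ n, hy_zero, hy_succ, Pi.zero_apply,
          mul_pow, inv_pow, integral_const_mul, ne_eq, OfNat.ofNat_ne_zero, not_false_eq_true,
          zero_pow, integral_zero, zero_add, div_eq_inv_mul]

end Martingale

section ConditionalExpectation

open Set

variable {Ω : Type*} {m m₀ : MeasurableSpace Ω} {μ : Measure Ω} [IsFiniteMeasure μ]
  {α β : Type*} [MeasurableSpace α] [MeasurableSpace β]

lemma map_restrict_prodMk_of_indep (hm : m ≤ m₀) {Z : Ω → α}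
    {W : Ω → β} (hZ : Measurable[m] Z) (hW : Measurable W)
    (hind : Indep m (MeasurableSpace.comap W inferInstance) μ) {A : Set Ω}
    (hA : MeasurableSet[m] A) :
    (μ.restrict A).map (fun ω => (Z ω, W ω)) = ((μ.restrict A).map Z).prod (μ.map W) := by
  have hZ' : Measurable Z := hZ.mono hm le_rfl
  refine (Measure.prod_eq fun s t hs ht => ?_).symm
  rw [Measure.map_apply (hZ'.prodMk hW) (hs.prod ht), Measure.map_apply hZ' hs,
    Measure.map_apply hW ht, Measure.restrict_apply' (hm A hA), Measure.restrict_apply' (hm A hA),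
    mk_preimage_prod, inter_right_comm]
  exact (Indep_iff _ _ _).mp hind _ _ ((hZ hs).inter hA) ⟨t, ht, rfl⟩

theorem condExp_comp_prodMk_of_indep {E : Type*} [NormedAddCommGroup E] [NormedSpace ℝ E]
    [CompleteSpace E] (hm : m ≤ m₀) {Z : Ω → α} {W : Ω → β}
    (hZ : Measurable[m] Z) (hW : Measurable W)
    (hind : Indep m (MeasurableSpace.comap W inferInstance) μ) {F : α × β → E}
    (hF : StronglyMeasurable F) (hint : Integrable (fun ω => F (Z ω, W ω)) μ) :
    μ[fun ω => F (Z ω, W ω) | m] =ᵐ[μ] fun ω => ∫ y, F (Z ω, y) ∂μ.map W := by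
  have hZ' : Measurable Z := hZ.mono hm le_rfl
  have hZW : Measurable fun ω => (Z ω, W ω) := hZ'.prodMk hW
  have hF_int {A : Set Ω} (hA : MeasurableSet[m] A) :
      Integrable F (((μ.restrict A).map Z).prod (μ.map W)) := by
    rw [← map_restrict_prodMk_of_indep hm hZ hW hind hA,
      integrable_map_measure hF.aestronglyMeasurable hZW.aemeasurable]
    exact hint.restrict
  refine (ae_eq_condExp_of_forall_setIntegral_eq hm hint (fun A hA _ => ?_) (fun A hA _ => ?_)
    (hF.integral_prod_right'.comp_measurable hZ).aestronglyMeasurable).symm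
  · exact (hF_int hA).integral_prod_left.comp_measurable hZ'
  · refine (integral_map hZ'.aemeasurable
      hF.integral_prod_right'.aestronglyMeasurable).symm.trans ?_
    rw [← integral_prod _ (hF_int hA), ← map_restrict_prodMk_of_indep hm hZ hW hind hA,
      integral_map hZW.aemeasurable hF.aestronglyMeasurable]

end ConditionalExpectation

section GeneratedSigmaAlgebra

open Set

variable {Ω S ι : Type*} {m₀ : MeasurableSpace Ω} [mS : MeasurableSpace S] {μ : Measure Ω}

/-- The σ-algebra `σ(X i, i ∈ s)` generated by the members of the family `X` with index in `s`. -/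
abbrev sigmaGenerated (X : ι → Ω → S) (s : Set ι) : MeasurableSpace Ω :=
  ⨆ i ∈ s, mS.comap (X i)

lemma sigmaGenerated_mono (X : ι → Ω → S) {s t : Set ι} (hst : s ⊆ t) :
    sigmaGenerated X s ≤ sigmaGenerated X t :=
  biSup_mono fun _ hi => hst hi

lemma sigmaGenerated_le {X : ι → Ω → S} (hX : ∀ i, Measurable (X i)) (s : Set ι) :
    sigmaGenerated X s ≤ m₀ :=
  iSup₂_le fun i _ => (hX i).comap_le

lemma measurable_sigmaGenerated (X : ι → Ω → S) {s : Set ι} {i : ι} (hi : i ∈ s) :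
    Measurable[sigmaGenerated X s] (X i) :=
  measurable_iff_comap_le.mpr (le_biSup (fun i => mS.comap (X i)) hi)

lemma indep_sigmaGenerated_comap {X : ι → Ω → S} (hX : ∀ i, Measurable (X i))
    (hindep : iIndepFun X μ) {s : Set ι} {k : ι} (hk : k ∉ s) :
    Indep (sigmaGenerated X s) (mS.comap (X k)) μ := by
  simpa only [mem_singleton_iff, iSup_iSup_eq_left] using
    indep_iSup_of_disjoint (fun i => (hX i).comap_le) hindep (disjoint_singleton_right.mpr hk)

/-- The filtration of the strict past of a sequence: at time `k` the variables `X 0, …, X (k - 1)`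
have been observed, but not yet `X k`. -/
def pastFiltration (X : ℕ → Ω → S) (hX : ∀ i, Measurable (X i)) : Filtration ℕ m₀ where
  seq k := sigmaGenerated X (Iio k)
  mono' _ _ hkl := sigmaGenerated_mono X (Iio_subset_Iio hkl)
  le' _ := sigmaGenerated_le hX _

end GeneratedSigmaAlgebra

section DegenerateKernel

open Finset

variable {Ω S ι : Type*} {m₀ : MeasurableSpace Ω} [MeasurableSpace S] {μ : Measure Ω}
  {ν : Measure S} {Δ : S → S → ℝ}

/-- A square integrable symmetric kernel which is completely degenerate for `ν`, in the sense of
the theory of U-statistics: integrating out one argument gives zero. -/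
structure IsDegenerateKernel (Δ : S → S → ℝ) (ν : Measure S) : Prop where
  measurable : Measurable (Function.uncurry Δ)
  symm : ∀ x y, Δ x y = Δ y x
  memLp : MemLp (Function.uncurry Δ) 2 (ν.prod ν)
  integral_eq_zero : ∀ᵐ x ∂ν, ∫ y, Δ x y ∂ν = 0

lemma IsDegenerateKernel.integral_prod_eq_zero [IsFiniteMeasure ν] (hΔ : IsDegenerateKernel Δ ν) :
    ∫ p, Function.uncurry Δ p ∂ν.prod ν = 0 :=
  (integral_prod _ (hΔ.memLp.integrable one_le_two)).trans
    (integral_eq_zero_of_ae hΔ.integral_eq_zero)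

variable [IsFiniteMeasure μ] {X : ι → Ω → S}

lemma measurePreserving_prodMk_of_iIndepFun (hX : ∀ i, MeasurePreserving (X i) μ ν)
    (hindep : iIndepFun X μ) {i j : ι} (hij : i ≠ j) :
    MeasurePreserving (fun ω => (X i ω, X j ω)) μ (ν.prod ν) :=
  ((hindep.indepFun hij).hasLaw_prod (hX i).hasLaw (hX j).hasLaw).measurePreserving
    ((hX i).measurable.prodMk (hX j).measurable)

lemma IsDegenerateKernel.memLp_comp (hΔ : IsDegenerateKernel Δ ν)
    (hX : ∀ i, MeasurePreserving (X i) μ ν) (hindep : iIndepFun X μ) {i j : ι} (hij : i ≠ j) :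
    MemLp (fun ω => Δ (X i ω) (X j ω)) 2 μ :=
  hΔ.memLp.comp_measurePreserving (measurePreserving_prodMk_of_iIndepFun hX hindep hij)

theorem IsDegenerateKernel.condExp_eq_zero (hΔ : IsDegenerateKernel Δ ν)
    (hX : ∀ i, MeasurePreserving (X i) μ ν) (hindep : iIndepFun X μ) {s : Set ι} {i k : ι}
    (hi : i ∈ s) (hk : k ∉ s) :
    μ[fun ω => Δ (X i ω) (X k ω) | sigmaGenerated X s] =ᵐ[μ] 0 := by
  have hXm i := (hX i).measurable
  have hik : i ≠ k := ne_of_mem_of_not_mem hi hk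
  have hcond := condExp_comp_prodMk_of_indep (sigmaGenerated_le hXm s)
    (measurable_sigmaGenerated X hi) (hXm k) (indep_sigmaGenerated_comap hXm hindep hk)
    hΔ.measurable.stronglyMeasurable
    ((hΔ.memLp_comp hX hindep hik).integrable one_le_two)
  filter_upwards [hcond, (hX i).quasiMeasurePreserving.ae hΔ.integral_eq_zero] with ω hω hzero
  rw [(hX k).map_eq] at hω
  exact hω.trans hzero

lemma measurable_kernel_sigmaGenerated (hΔ : Measurable (Function.uncurry Δ)) (X : ι → Ω → S)
    {s : Set ι} {i j : ι} (hi : i ∈ s) (hj : j ∈ s) :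
    Measurable[sigmaGenerated X s] fun ω => Δ (X i ω) (X j ω) :=
  hΔ.comp ((measurable_sigmaGenerated X hi).prodMk (measurable_sigmaGenerated X hj))

lemma IsDegenerateKernel.integral_mul_eq_zero (hΔ : IsDegenerateKernel Δ ν)
    (hX : ∀ i, MeasurePreserving (X i) μ ν) (hindep : iIndepFun X μ) {a b k : ι}
    (hab : a ≠ b) (hak : a ≠ k) (hbk : b ≠ k) :
    ∫ ω, Δ (X a ω) (X k ω) * Δ (X b ω) (X k ω) ∂μ = 0 := by
  have hXm i := (hX i).measurable
  have ha := hΔ.memLp_comp hX hindep hak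
  have hb := hΔ.memLp_comp hX hindep hbk.symm
  have hcond := hΔ.condExp_eq_zero (s := {a, k}) (k := b) hX hindep
    (Set.mem_insert_of_mem a rfl) (by simp [hab.symm, hbk])
  simp only [hΔ.symm (X b _)]
  rw [integral_mul_eq_integral_mul_condExp (sigmaGenerated_le hXm {a, k})
    (measurable_kernel_sigmaGenerated hΔ.measurable X (by simp) (by simp)).stronglyMeasurable
    (ha.integrable_mul hb) (hb.integrable one_le_two)]
  refine integral_eq_zero_of_ae ?_
  filter_upwards [hcond] with ω hω
  exact mul_eq_zero_of_right _ hω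

theorem IsDegenerateKernel.integral_sum_sq (hΔ : IsDegenerateKernel Δ ν)
    (hX : ∀ i, MeasurePreserving (X i) μ ν) (hindep : iIndepFun X μ) {s : Finset ι} {k : ι}
    (hk : k ∉ s) :
    ∫ ω, (∑ i ∈ s, Δ (X i ω) (X k ω)) ^ 2 ∂μ = #s * ∫ p, Δ p.1 p.2 ^ 2 ∂ν.prod ν := by
  have hne {i : ι} (hi : i ∈ s) : i ≠ k := ne_of_mem_of_not_mem hi hk
  have hint {a b : ι} (ha : a ∈ s) (hb : b ∈ s) :
      Integrable (fun ω => Δ (X a ω) (X k ω) * Δ (X b ω) (X k ω)) μ :=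
    (hΔ.memLp_comp hX hindep (hne ha)).integrable_mul
      (hΔ.memLp_comp hX hindep (hne hb))
  have hdiag {a : ι} (ha : a ∈ s) :
      ∫ ω, Δ (X a ω) (X k ω) * Δ (X a ω) (X k ω) ∂μ = ∫ p, Δ p.1 p.2 ^ 2 ∂ν.prod ν := by
    simp only [← sq]
    exact (measurePreserving_prodMk_of_iIndepFun hX hindep (hne ha)).hasLaw.integral_comp
      (hΔ.measurable.pow_const 2).aestronglyMeasurable
  calc ∫ ω, (∑ i ∈ s, Δ (X i ω) (X k ω)) ^ 2 ∂μ
      = ∑ a ∈ s, ∑ b ∈ s, ∫ ω, Δ (X a ω) (X k ω) * Δ (X b ω) (X k ω) ∂μ := by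
        simp only [sq, sum_mul_sum]
        rw [integral_finsetSum _ fun a ha => integrable_finsetSum _ fun b hb => hint ha hb]
        exact sum_congr rfl fun a ha => integral_finsetSum _ fun b hb => hint ha hb
    _ = ∑ a ∈ s, ∫ p, Δ p.1 p.2 ^ 2 ∂ν.prod ν := by
        refine sum_congr rfl fun a ha => ?_
        rw [sum_eq_single_of_mem a ha, hdiag ha]
        exact fun b hb hba =>
          hΔ.integral_mul_eq_zero hX hindep hba.symm (hne ha) (hne hb)
    _ = #s * ∫ p, Δ p.1 p.2 ^ 2 ∂ν.prod ν := by rw [sum_const, nsmul_eq_mul]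

end DegenerateKernel

section UStatistic

open Finset

variable {Ω S : Type*}

/-- The unnormalised U-statistic `∑_{i < j < l} Δ (X i) (X j)` of the first `l` observations. -/
def pairSum (Δ : S → S → ℝ) (X : ℕ → Ω → S) (l : ℕ) (ω : Ω) : ℝ :=
  ∑ j ∈ range l, ∑ i ∈ range j, Δ (X i ω) (X j ω)

lemma pairSum_succ_sub (Δ : S → S → ℝ) (X : ℕ → Ω → S) (k : ℕ) (ω : Ω) :
    pairSum Δ X (k + 1) ω - pairSum Δ X k ω = ∑ i ∈ range k, Δ (X i ω) (X k ω) :=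
  sum_range_succ_sub_sum _

variable {m₀ : MeasurableSpace Ω} [MeasurableSpace S] {μ : Measure Ω} [IsFiniteMeasure μ]
  {ν : Measure S} {Δ : S → S → ℝ} {X : ℕ → Ω → S}

lemma memLp_pairSum (hΔ : IsDegenerateKernel Δ ν) (hX : ∀ i, MeasurePreserving (X i) μ ν)
    (hindep : iIndepFun X μ) (l : ℕ) : MemLp (pairSum Δ X l) 2 μ :=
  memLp_finsetSum _ fun _ _ => memLp_finsetSum _ fun _ hi =>
    hΔ.memLp_comp hX hindep (mem_range.mp hi).ne

theorem martingale_pairSum (hΔ : IsDegenerateKernel Δ ν) (hX : ∀ i, MeasurePreserving (X i) μ ν)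
    (hindep : iIndepFun X μ) :
    Martingale (pairSum Δ X) (pastFiltration X fun i => (hX i).measurable) μ := by
  refine martingale_of_condExp_sub_eq_zero_nat (fun l => ?_)
    (fun l => (memLp_pairSum hΔ hX hindep l).integrable one_le_two) fun k => ?_
  · refine (Finset.measurable_fun_sum _ fun j hj => Finset.measurable_fun_sum _ fun i hi => ?_)
      |>.stronglyMeasurable
    rw [mem_range] at hi hj
    exact measurable_kernel_sigmaGenerated hΔ.measurable X (hi.trans hj) hj
  · have hsum : pairSum Δ X (k + 1) - pairSum Δ X k =
        ∑ i ∈ range k, fun ω => Δ (X i ω) (X k ω) := by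
      ext ω
      rw [Pi.sub_apply, pairSum_succ_sub, Finset.sum_apply]
    rw [hsum]
    refine (condExp_finsetSum (fun i hi => (hΔ.memLp_comp hX hindep
      (mem_range.mp hi).ne).integrable one_le_two) _).trans ?_
    refine (eventuallyEq_sum fun i hi => hΔ.condExp_eq_zero hX hindep
      (Set.mem_Iio.mpr (mem_range.mp hi)) (lt_irrefl k)).trans ?_
    rw [sum_const_zero]

lemma sum_range_div_sq_le_sum_Icc_one_div (n : ℕ) :
    ∑ k ∈ range n, (k : ℝ) / (k + 1 : ℕ) ^ 2 ≤ ∑ i ∈ Icc 1 n, (1 : ℝ) / i := by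
  rw [← Ico_add_one_right_eq_Icc, range_eq_Ico, ← sum_Ico_add' _ 0 n 1]
  refine sum_le_sum fun k _ => ?_
  rw [div_le_div_iff₀ (by positivity) (by positivity)]
  push_cast
  nlinarith [k.cast_nonneg (α := ℝ)]

theorem integral_sup'_abs_pairSum_div_sq_le (hΔ : IsDegenerateKernel Δ ν)
    (hX : ∀ i, MeasurePreserving (X i) μ ν) (hindep : iIndepFun X μ) {n : ℕ} (hn : 1 ≤ n) :
    ∫ ω, ((Icc 1 n).sup' (nonempty_Icc.mpr hn) fun l => |pairSum Δ X l ω| / l) ^ 2 ∂μ ≤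
      16 * (∫ p, Δ p.1 p.2 ^ 2 ∂ν.prod ν) * ∑ i ∈ Icc 1 n, (1 : ℝ) / i := by
  set σ := ∫ p, Δ p.1 p.2 ^ 2 ∂ν.prod ν
  have hzero (ω : Ω) : pairSum Δ X 0 ω = 0 := sum_range_zero _
  have hincr (k : ℕ) : ∫ ω, (pairSum Δ X (k + 1) ω - pairSum Δ X k ω) ^ 2 ∂μ = k * σ := by
    simp only [pairSum_succ_sub]
    rw [hΔ.integral_sum_sq hX hindep notMem_range_self, card_range]
  calc ∫ ω, ((Icc 1 n).sup' (nonempty_Icc.mpr hn) fun l => |pairSum Δ X l ω| / l) ^ 2 ∂μ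
      ≤ 16 * ∑ k ∈ range n, k * σ / (k + 1 : ℕ) ^ 2 := by
        simpa only [hzero, sub_zero, hincr] using
          integral_sup'_abs_sub_div_sq_le_of_martingale (martingale_pairSum hΔ hX hindep)
            (memLp_pairSum hΔ hX hindep) Nat.mono_cast (Nat.cast_nonneg 0)
            (Nat.cast_pos.mpr one_pos) hn
    _ = 16 * σ * ∑ k ∈ range n, (k : ℝ) / (k + 1 : ℕ) ^ 2 := by
        simp only [mul_comm _ σ, mul_div_assoc, ← mul_sum, ← mul_assoc]
    _ ≤ 16 * σ * ∑ i ∈ Icc 1 n, (1 : ℝ) / i := by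
        have hσ : 0 ≤ σ := integral_nonneg fun _ => sq_nonneg _
        exact mul_le_mul_of_nonneg_left (sum_range_div_sq_le_sum_Icc_one_div n)
          (mul_nonneg (by norm_num) hσ)

lemma sum_Icc_one_div_le_log_three_mul {n : ℕ} (hn : 1 ≤ n) :
    ∑ i ∈ Icc 1 n, (1 : ℝ) / i ≤ Real.log (3 * n) := by
  have hlog_three : 1 ≤ Real.log 3 :=
    (Real.le_log_iff_exp_le three_pos).mpr (Real.exp_one_lt_d9.le.trans (by norm_num))
  calc ∑ i ∈ Icc 1 n, (1 : ℝ) / i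
      = (harmonic n : ℝ) := by simp [harmonic_eq_sum_Icc]
    _ ≤ 1 + Real.log n := harmonic_le_one_add_log n
    _ ≤ Real.log 3 + Real.log n := by gcongr
    _ = Real.log (3 * n) := (Real.log_mul three_ne_zero (by positivity)).symm

theorem integral_sup'_abs_pairSum_div_sq_le_log (hΔ : IsDegenerateKernel Δ ν)
    (hX : ∀ i, MeasurePreserving (X i) μ ν) (hindep : iIndepFun X μ) {n : ℕ} (hn : 1 ≤ n) :
    ∫ ω, ((Icc 1 n).sup' (nonempty_Icc.mpr hn) fun l => |pairSum Δ X l ω| / l) ^ 2 ∂μ ≤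
      16 * (∫ p, Δ p.1 p.2 ^ 2 ∂ν.prod ν) * Real.log (3 * n) :=
  (integral_sup'_abs_pairSum_div_sq_le hΔ hX hindep hn).trans <|
    mul_le_mul_of_nonneg_left (sum_Icc_one_div_le_log_three_mul hn) <|
      mul_nonneg (by norm_num) (integral_nonneg fun _ => sq_nonneg _)

end UStatistic

section HoeffdingDecomposition

variable {S : Type*} [MeasurableSpace S] {ν : Measure S} {h : S → S → ℝ}

/-- The first-order term `w x = E[h(X, x)]`, `X ∼ ν`, of the Hoeffding decomposition of `h`. It is
not centred: its mean is that of `h`. -/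
noncomputable def hoeffdingProj (h : S → S → ℝ) (ν : Measure S) (x : S) : ℝ :=
  ∫ y, h y x ∂ν

/-- The second-order term of the Hoeffding decomposition of `h`. The mean of `h` is added back since
each of the two projections carries it. -/
noncomputable def hoeffdingRemainder (h : S → S → ℝ) (ν : Measure S) (x y : S) : ℝ :=
  h x y - hoeffdingProj h ν x - hoeffdingProj h ν y + ∫ p, h p.1 p.2 ∂ν.prod ν

lemma measurable_hoeffdingProj [SFinite ν] (hmeas : Measurable (Function.uncurry h)) :
    Measurable (hoeffdingProj h ν) :=
  hmeas.stronglyMeasurable.integral_prod_left (f := h) |>.measurable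

lemma memLp_hoeffdingProj [IsProbabilityMeasure ν] (hmeas : Measurable (Function.uncurry h))
    (hh₂ : MemLp (Function.uncurry h) 2 (ν.prod ν)) : MemLp (hoeffdingProj h ν) 2 ν := by
  have hproj := (measurable_hoeffdingProj (ν := ν) hmeas).aestronglyMeasurable (μ := ν)
  rw [memLp_two_iff_integrable_sq hproj]
  refine hh₂.integrable_sq.integral_prod_right.mono' (hproj.pow 2) ?_
  filter_upwards [hh₂.integrable_sq.prod_left_ae] with x hx
  have hx₂ : MemLp (h · x) 2 ν :=
    (memLp_two_iff_integrable_sq hmeas.of_uncurry_right.aestronglyMeasurable).mpr hx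
  rw [Real.norm_of_nonneg (sq_nonneg _), ← sub_nonneg]
  exact (variance_nonneg _ _).trans_eq (variance_eq_sub hx₂)

lemma integral_hoeffdingProj [SFinite ν] (hh : Integrable (Function.uncurry h) (ν.prod ν)) :
    ∫ x, hoeffdingProj h ν x ∂ν = ∫ p, h p.1 p.2 ∂ν.prod ν :=
  (integral_prod_symm _ hh).symm

variable [IsProbabilityMeasure ν]

theorem isDegenerateKernel_hoeffdingRemainder (hmeas : Measurable (Function.uncurry h))
    (hsymm : ∀ x y, h x y = h y x) (hh₂ : MemLp (Function.uncurry h) 2 (ν.prod ν)) :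
    IsDegenerateKernel (hoeffdingRemainder h ν) ν := by
  have hw := measurable_hoeffdingProj (ν := ν) hmeas
  have hw₂ := memLp_hoeffdingProj hmeas hh₂
  have hh := hh₂.integrable one_le_two
  refine ⟨?_, fun x y => ?_, ?_, ?_⟩
  · exact ((hmeas.sub (hw.comp measurable_fst)).sub (hw.comp measurable_snd)).add_const _
  · rw [hoeffdingRemainder, hoeffdingRemainder, hsymm, sub_right_comm]
  · exact ((hh₂.sub (hw₂.comp_fst ν)).sub (hw₂.comp_snd ν)).add (memLp_const _)
  · filter_upwards [hh.prod_right_ae] with x (hx : Integrable (h x ·) ν)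
    have hproj : ∫ y, h x y ∂ν = hoeffdingProj h ν x := by simp only [hoeffdingProj, hsymm x]
    have hw_int := hw₂.integrable one_le_two
    have hx' : Integrable (fun y => h x y - hoeffdingProj h ν x) ν := hx.sub (integrable_const _)
    calc ∫ y, hoeffdingRemainder h ν x y ∂ν
        = ∫ y, (h x y - hoeffdingProj h ν x - hoeffdingProj h ν y) ∂ν +
            ∫ _, ∫ p, h p.1 p.2 ∂ν.prod ν ∂ν :=
          integral_add (hx'.sub hw_int) (integrable_const _)
      _ = ∫ y, h x y ∂ν - hoeffdingProj h ν x - ∫ y, hoeffdingProj h ν y ∂ν +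
            ∫ p, h p.1 p.2 ∂ν.prod ν := by
          rw [integral_sub hx' hw_int, integral_sub hx (integrable_const _), integral_const,
            integral_const, probReal_univ, one_smul, one_smul]
      _ = 0 := by rw [hproj, integral_hoeffdingProj hh, sub_self, zero_sub, neg_add_cancel]

variable {Δ : S → S → ℝ}

lemma IsDegenerateKernel.covariance_fst_eq_zero (hΔ : IsDegenerateKernel Δ ν) {g : S → ℝ}
    (hg : MemLp g 2 ν) : cov[Function.uncurry Δ, fun p => g p.1; ν.prod ν] = 0 := by
  rw [covariance_eq_sub hΔ.memLp (hg.comp_fst ν), hΔ.integral_prod_eq_zero, zero_mul, sub_zero,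
    integral_prod _ (hΔ.memLp.integrable_mul (hg.comp_fst ν))]
  refine integral_eq_zero_of_ae ?_
  filter_upwards [hΔ.integral_eq_zero] with x hx
  exact (integral_mul_const (g x) _).trans (mul_eq_zero_of_left hx _)

lemma IsDegenerateKernel.covariance_snd_eq_zero (hΔ : IsDegenerateKernel Δ ν) {g : S → ℝ}
    (hg : MemLp g 2 ν) : cov[Function.uncurry Δ, fun p => g p.2; ν.prod ν] = 0 := by
  rw [covariance_eq_sub hΔ.memLp (hg.comp_snd ν), hΔ.integral_prod_eq_zero, zero_mul, sub_zero,
    integral_prod_symm _ (hΔ.memLp.integrable_mul (hg.comp_snd ν))]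
  refine integral_eq_zero_of_ae ?_
  filter_upwards [hΔ.integral_eq_zero] with x hx
  simp only [hΔ.symm x] at hx
  exact (integral_mul_const (g x) _).trans (mul_eq_zero_of_left hx _)

theorem integral_hoeffdingRemainder_sq (hmeas : Measurable (Function.uncurry h))
    (hsymm : ∀ x y, h x y = h y x) (hh₂ : MemLp (Function.uncurry h) 2 (ν.prod ν)) :
    ∫ p, hoeffdingRemainder h ν p.1 p.2 ^ 2 ∂ν.prod ν =
      Var[Function.uncurry h; ν.prod ν] - 2 * Var[hoeffdingProj h ν; ν] := by
  have hw₂ := memLp_hoeffdingProj hmeas hh₂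
  have hΔ := isDegenerateKernel_hoeffdingRemainder hmeas hsymm hh₂
  set Δ := hoeffdingRemainder h ν with hΔ_def
  set w := hoeffdingProj h ν
  have hw_fst : MemLp (fun p : S × S => w p.1) 2 (ν.prod ν) := hw₂.comp_fst ν
  have hw_snd : MemLp (fun p : S × S => w p.2) 2 (ν.prod ν) := hw₂.comp_snd ν
  have hw_add : MemLp (fun p : S × S => w p.1 + w p.2) 2 (ν.prod ν) := hw_fst.add hw_snd
  have hcov : cov[Function.uncurry Δ, fun p => w p.1 + w p.2; ν.prod ν] = 0 := by
    refine (covariance_add_right hΔ.memLp hw_fst hw_snd).trans ?_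
    rw [hΔ.covariance_fst_eq_zero hw₂, hΔ.covariance_snd_eq_zero hw₂, add_zero]
  have hdecomp : Function.uncurry h = fun p : S × S =>
      (Function.uncurry Δ + fun p : S × S => w p.1 + w p.2) p - ∫ p, h p.1 p.2 ∂ν.prod ν := by
    ext p
    simp only [Function.uncurry, Pi.add_apply, hΔ_def, hoeffdingRemainder, w]
    ring
  have hvar : Var[Function.uncurry h; ν.prod ν] =
      ∫ p, Δ p.1 p.2 ^ 2 ∂ν.prod ν + 2 * Var[w; ν] := by
    rw [hdecomp, variance_sub_const (hΔ.memLp.add hw_add).aestronglyMeasurable,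
      variance_add hΔ.memLp hw_add, hcov, variance_add_prod hw₂ hw₂,
      variance_of_integral_eq_zero hΔ.measurable.aemeasurable hΔ.integral_prod_eq_zero]
    simp only [Function.uncurry]
    ring
  rw [hvar, add_sub_cancel_right]

end HoeffdingDecomposition

/-- With `Δ(x,y) = h(x,y) − w(x) − w(y)` and
`S_l = Σ_{0 ≤ i < j < l} Δ(X_i, X_j)`, for every `n ≥ 1`,
`E[(max_{1≤l≤n} l⁻¹|S_l|)²] ≤ 16 (σ_h² − 2σ_w²) Σ_{i=1}^n i⁻¹`, and consequently
`E[(max_{1≤l≤n} l⁻¹|S_l|)²] ≤ 16 (σ_h² − 2σ_w²) log(3n)`. -/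
theorem stmt_9 {Ω : Type*} [MeasureSpace Ω] [IsProbabilityMeasure (ℙ : Measure Ω)]
    {S : Type*} [MeasurableSpace S]
    (X : ℕ → Ω → S) (hXmeas : ∀ i, Measurable (X i))
    (hindep : iIndepFun X ℙ)
    (hident : ∀ i, Measure.map (X i) ℙ = Measure.map (X 0) ℙ)
    (h : S → S → ℝ) (hmeas : Measurable (Function.uncurry h))
    (hsymm : ∀ x y, h x y = h y x)
    (hmean : (∫ ω, h (X 0 ω) (X 1 ω) ∂ℙ) = 0)
    (hL2 : Integrable (fun ω => (h (X 0 ω) (X 1 ω)) ^ 2) ℙ)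
    (w : S → ℝ) (hw : ∀ x, w x = ∫ ω, h (X 0 ω) x ∂ℙ)
    (Sproc : ℕ → Ω → ℝ)
    (hS : ∀ l ω, Sproc l ω = ∑ j ∈ Finset.range l, ∑ i ∈ Finset.range j,
      (h (X i ω) (X j ω) - w (X i ω) - w (X j ω)))
    (n : ℕ) (hn : 1 ≤ n) :
    (∫ ω, ((Finset.Icc 1 n).sup' (Finset.nonempty_Icc.mpr hn)
        (fun l => |Sproc l ω| / l)) ^ 2 ∂ℙ)
      ≤ 16 * ((∫ ω, (h (X 0 ω) (X 1 ω)) ^ 2 ∂ℙ) - 2 * variance (fun ω => w (X 0 ω)) ℙ) *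
          (∑ i ∈ Finset.Icc 1 n, (1 : ℝ) / i) ∧
    (∫ ω, ((Finset.Icc 1 n).sup' (Finset.nonempty_Icc.mpr hn)
        (fun l => |Sproc l ω| / l)) ^ 2 ∂ℙ)
      ≤ 16 * ((∫ ω, (h (X 0 ω) (X 1 ω)) ^ 2 ∂ℙ) - 2 * variance (fun ω => w (X 0 ω)) ℙ) *
          Real.log (3 * n) := by
  set ν : Measure S := Measure.map (X 0) ℙ
  have hX (i : ℕ) : MeasurePreserving (X i) ℙ ν := ⟨hXmeas i, hident i⟩
  have : IsProbabilityMeasure ν := Measure.isProbabilityMeasure_map (hXmeas 0).aemeasurable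
  have hpair := measurePreserving_prodMk_of_iIndepFun hX hindep zero_ne_one
  have hh₂ : MemLp (Function.uncurry h) 2 (ν.prod ν) :=
    (memLp_two_iff_integrable_sq hmeas.aestronglyMeasurable).mpr
      ((hpair.integrable_comp (hmeas.pow_const 2).aestronglyMeasurable).mp hL2)
  have hh_mean : ∫ p, h p.1 p.2 ∂ν.prod ν = 0 :=
    (hpair.hasLaw.integral_comp hmeas.aestronglyMeasurable).symm.trans hmean
  obtain rfl : w = hoeffdingProj h ν := funext fun x => (hw x).trans
    ((hX 0).hasLaw.integral_comp (f := (h · x)) hmeas.of_uncurry_right.aestronglyMeasurable)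
  obtain rfl : Sproc = pairSum (hoeffdingRemainder h ν) X := by
    ext l ω
    simp only [hS, pairSum, hoeffdingRemainder, hh_mean, add_zero]
  have hsecond : ∫ p, hoeffdingRemainder h ν p.1 p.2 ^ 2 ∂ν.prod ν =
      (∫ ω, h (X 0 ω) (X 1 ω) ^ 2) - 2 * Var[fun ω => hoeffdingProj h ν (X 0 ω)] := by
    rw [integral_hoeffdingRemainder_sq hmeas hsymm hh₂,
      variance_of_integral_eq_zero hmeas.aemeasurable hh_mean,
      (hX 0).variance_fun_comp (measurable_hoeffdingProj hmeas).aemeasurable]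
    exact congrArg (· - _)
      (hpair.hasLaw.integral_comp (hmeas.pow_const 2).aestronglyMeasurable).symm
  have hΔ := isDegenerateKernel_hoeffdingRemainder hmeas hsymm hh₂
  rw [← hsecond]
  exact ⟨integral_sup'_abs_pairSum_div_sq_le hΔ hX hindep hn,
    integral_sup'_abs_pairSum_div_sq_le_log hΔ hX hindep hn⟩
end

section
/- Let X_{i,k} = n^{−1} Σ_{j=1}^n 1[R_{n(i−1)+j,k} ≤ a_k] − π_k for i ≥ 1 and k ∈ {1,…,p}. Then for all i ≥ 1 and all k,l ∈ {1,…,p}, E[X_{i,k} X_{i+1,l}] = n^{−2} Σ_{d=1}^{m−1} d · ( P(R_{1,k} ≤ a_k, R_{d+1,l} ≤ a_l) − π_k π_l ). -/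
open MeasureTheory ProbabilityTheory

/-!
For windows `W_s = (V_s, …, V_{s+m-1})` of an i.i.d. sequence, the covariance of `f(W_s)` and
`g(W_{s+d})` depends only on `d`, by stationarity, and vanishes for `d ≥ m`, because the windows are
then disjoint. The covariance of sums over two adjacent blocks of length `n` thus becomes a sum over
lags, in which each `d ≤ n` occurs exactly `d` times, as the lag of a pair straddling the boundary.
-/

section LagSums

variable {M : Type*} [AddCommMonoid M] {c : ℕ → M} {m n : ℕ}

lemma sum_range_sum_range_add (hc : ∀ d, n ≤ d → c d = 0) :
    ∑ u ∈ Finset.range n, ∑ v ∈ Finset.range n, c (u + v) =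
      ∑ d ∈ Finset.range n, (d + 1) • c d := by
  have triangle : ∀ u ∈ Finset.range n, ∑ v ∈ Finset.range n, c (u + v) =
      ∑ v ∈ Finset.range (n - u), c (u + v) := fun u _ ↦
    (Finset.sum_subset (Finset.range_mono (n.sub_le u)) fun v _ hv ↦
      hc _ (by rw [Finset.mem_range] at hv; omega)).symm
  rw [Finset.sum_congr rfl triangle, ← Finset.sum_range_diag_flip n fun u v ↦ c (u + v)]
  refine Finset.sum_congr rfl fun d _ ↦ ?_
  have antidiagonal : ∀ u ∈ Finset.range (d + 1), c (u + (d - u)) = c d := fun u hu ↦ by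
    rw [Nat.add_sub_cancel' (Finset.mem_range_succ_iff.mp hu)]
  rw [Finset.sum_congr rfl antidiagonal, Finset.sum_const, Finset.card_range]

lemma sum_Icc_sum_Icc_add_sub (hmn : m ≤ n + 1) (hc : ∀ d, m ≤ d → c d = 0) :
    ∑ j ∈ Finset.Icc 1 n, ∑ j' ∈ Finset.Icc 1 n, c (n + j' - j) =
      ∑ d ∈ Finset.Icc 1 (m - 1), d • c d := by
  have reindex : ∀ h : ℕ → M, ∑ j ∈ Finset.Icc 1 n, h j = ∑ v ∈ Finset.range n, h (v + 1) :=
    fun h ↦ by rw [Finset.range_eq_Ico, Finset.sum_Ico_add' h 0 n 1, zero_add]; rfl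
  calc ∑ j ∈ Finset.Icc 1 n, ∑ j' ∈ Finset.Icc 1 n, c (n + j' - j)
    _ = ∑ u ∈ Finset.range n, ∑ v ∈ Finset.range n, c (u + v + 1) := by
      rw [reindex, ← Finset.sum_range_reflect]
      refine Finset.sum_congr rfl fun u hu ↦ (reindex _).trans (Finset.sum_congr rfl fun v _ ↦ ?_)
      rw [Finset.mem_range] at hu
      congr 1
      omega
    _ = ∑ d ∈ Finset.range n, (d + 1) • c (d + 1) :=
      sum_range_sum_range_add (c := fun d ↦ c (d + 1)) fun d hd ↦ hc _ (by omega)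
    _ = ∑ d ∈ Finset.Icc 1 n, d • c d := (reindex fun d ↦ d • c d).symm
    _ = ∑ d ∈ Finset.Icc 1 (m - 1), d • c d := by
      refine (Finset.sum_subset (Finset.Icc_subset_Icc_right (by omega)) fun d hd hdm ↦ ?_).symm
      rw [Finset.mem_Icc] at hd hdm
      rw [hc d (by omega), smul_zero]

end LagSums

section Covariance

variable {Ω Ω' : Type*} {mΩ : MeasurableSpace Ω} {mΩ' : MeasurableSpace Ω'}
  {μ : Measure Ω} {ν : Measure Ω'}

lemma covariance_eq_of_identDistrib_pair {X Y : Ω → ℝ} {X' Y' : Ω' → ℝ}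
    (h : IdentDistrib (fun ω ↦ (X ω, Y ω)) (fun ω ↦ (X' ω, Y' ω)) μ ν) :
    cov[X, Y; μ] = cov[X', Y'; ν] := by
  have hX : μ[X] = ν[X'] := (h.comp measurable_fst).integral_eq
  have hY : μ[Y] = ν[Y'] := (h.comp measurable_snd).integral_eq
  rw [covariance, covariance, hX, hY]
  exact (h.comp (u := fun z ↦ (z.1 - ν[X']) * (z.2 - ν[Y'])) (by fun_prop)).integral_eq

lemma integral_indicator_one_of_nullMeasurableSet {A : Set Ω} (hA : NullMeasurableSet A μ) :
    ∫ ω, A.indicator (1 : Ω → ℝ) ω ∂μ = μ.real A := by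
  rw [integral_indicator₀ hA]
  simp

lemma memLp_indicator_one_of_nullMeasurableSet [IsFiniteMeasure μ] {A : Set Ω}
    (hA : NullMeasurableSet A μ) (q : ENNReal) : MemLp (A.indicator (1 : Ω → ℝ)) q μ :=
  MemLp.of_bound (aemeasurable_one.indicator₀ hA).aestronglyMeasurable 1 <| .of_forall fun _ ↦
    (norm_indicator_le_norm_self _ _).trans (by simp)

lemma covariance_indicator_one [IsProbabilityMeasure μ] {A B : Set Ω}
    (hA : NullMeasurableSet A μ) (hB : NullMeasurableSet B μ) :
    cov[A.indicator 1, B.indicator 1; μ] = μ.real (A ∩ B) - μ.real A * μ.real B := by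
  rw [covariance_eq_sub (memLp_indicator_one_of_nullMeasurableSet hA 2)
    (memLp_indicator_one_of_nullMeasurableSet hB 2), ← Set.inter_indicator_one]
  simp only [integral_indicator_one_of_nullMeasurableSet, hA, hB, hA.inter hB]

lemma covariance_sum_adjacent_blocks [IsFiniteMeasure μ] {ξ η : ℕ → Ω → ℝ} {c : ℕ → ℝ} {m n : ℕ}
    (hξ : ∀ s, MemLp (ξ s) 2 μ) (hη : ∀ s, MemLp (η s) 2 μ)
    (hstat : ∀ s d, cov[ξ s, η (s + d); μ] = c d) (hc : ∀ d, m ≤ d → c d = 0)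
    (hmn : m ≤ n + 1) (s : ℕ) :
    cov[fun ω ↦ ∑ j ∈ Finset.Icc 1 n, ξ (s + j) ω,
        fun ω ↦ ∑ j ∈ Finset.Icc 1 n, η (s + n + j) ω; μ] =
      ∑ d ∈ Finset.Icc 1 (m - 1), d * c d := by
  rw [covariance_fun_sum_fun_sum' (fun j _ ↦ hξ (s + j)) fun j _ ↦ hη (s + n + j)]
  have lag : ∀ j ∈ Finset.Icc 1 n, ∀ j' ∈ Finset.Icc 1 n,
      cov[ξ (s + j), η (s + n + j'); μ] = c (n + j' - j) := fun j hj j' _ ↦ by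
    rw [Finset.mem_Icc] at hj
    rw [← hstat (s + j), show s + j + (n + j' - j) = s + n + j' by omega]
  rw [Finset.sum_congr rfl fun j hj ↦ Finset.sum_congr rfl (lag j hj),
    sum_Icc_sum_Icc_add_sub hmn hc]
  simp only [nsmul_eq_mul]

end Covariance

section Windows

variable {Ω E : Type*} {mΩ : MeasurableSpace Ω} {mE : MeasurableSpace E} {μ : Measure Ω}

/-- The window `(V_s, …, V_{s+m-1})` of length `m` starting at time `s` in the sequence `V`,
on which an `m`-scans process at time `s` depends. -/
def window (V : ℕ → Ω → E) (m s : ℕ) (ω : Ω) : Fin m → E := fun r ↦ V (s + r) ω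

variable {V : ℕ → Ω → E} {m n : ℕ}

lemma aemeasurable_window (hV : ∀ j, AEMeasurable (V j) μ) (s : ℕ) :
    AEMeasurable (window V m s) μ :=
  aemeasurable_pi_lambda _ fun _ ↦ hV _

lemma indepFun_window (hV : ∀ j, AEMeasurable (V j) μ) (hindep : iIndepFun V μ) {s t : ℕ}
    (hst : s + m ≤ t) : window V m s ⟂ᵢ[μ] window V n t := by
  have hdisj : Disjoint (Finset.Ico s (s + m)) (Finset.Ico t (t + n)) := by
    rw [Finset.disjoint_left]
    intro j hs ht
    rw [Finset.mem_Ico] at hs ht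
    omega
  let φ (z : Finset.Ico s (s + m) → E) (r : Fin m) : E := z ⟨s + r, by simp⟩
  let ψ (z : Finset.Ico t (t + n) → E) (r : Fin n) : E := z ⟨t + r, by simp⟩
  exact (hindep.indepFun_finset₀ _ _ hdisj hV).comp (φ := φ) (ψ := ψ) (by fun_prop) (by fun_prop)

lemma identDistrib_window_pair (hindep : iIndepFun V μ)
    (hident : ∀ j, IdentDistrib (V j) (V 1) μ μ) (s t d : ℕ) :
    IdentDistrib (fun ω ↦ (window V m s ω, window V n (s + d) ω))
      (fun ω ↦ (window V m t ω, window V n (t + d) ω)) μ μ := by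
  have hshift : IdentDistrib (fun ω j ↦ V (s + j) ω) (fun ω j ↦ V (t + j) ω) μ μ :=
    IdentDistrib.pi (fun j ↦ (hident (s + j)).trans (hident (t + j)).symm)
      (hindep.precomp (add_right_injective s)) (hindep.precomp (add_right_injective t))
  let windows (z : ℕ → E) : (Fin m → E) × (Fin n → E) := (fun r ↦ z r, fun r ↦ z (d + r))
  have h := hshift.comp (u := windows) (by fun_prop)
  simp only [windows, Function.comp_def, ← add_assoc] at h
  exact h

lemma identDistrib_window (hindep : iIndepFun V μ) (hident : ∀ j, IdentDistrib (V j) (V 1) μ μ)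
    (s t : ℕ) : IdentDistrib (window V m s) (window V m t) μ μ :=
  (identDistrib_window_pair (n := m) hindep hident s t 0).comp measurable_fst

variable {f g : (Fin m → E) → ℝ}

lemma covariance_sum_window_adjacent_blocks (hindep : iIndepFun V μ)
    (hident : ∀ j, IdentDistrib (V j) (V 1) μ μ) (hf : Measurable f) (hg : Measurable g)
    (hf₂ : MemLp (f ∘ window V m 1) 2 μ) (hg₂ : MemLp (g ∘ window V m 1) 2 μ) (hmn : m ≤ n + 1)
    (s : ℕ) :
    cov[fun ω ↦ ∑ j ∈ Finset.Icc 1 n, f (window V m (s + j) ω),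
        fun ω ↦ ∑ j ∈ Finset.Icc 1 n, g (window V m (s + n + j) ω); μ] =
      ∑ d ∈ Finset.Icc 1 (m - 1), d * cov[f ∘ window V m 1, g ∘ window V m (1 + d); μ] := by
  have : IsProbabilityMeasure μ := hindep.isProbabilityMeasure
  have hf₂' (s : ℕ) : MemLp (f ∘ window V m s) 2 μ :=
    ((identDistrib_window hindep hident 1 s).comp hf).memLp_snd hf₂
  have hg₂' (s : ℕ) : MemLp (g ∘ window V m s) 2 μ :=
    ((identDistrib_window hindep hident 1 s).comp hg).memLp_snd hg₂
  refine covariance_sum_adjacent_blocks hf₂' hg₂' (fun s d ↦ ?_) (fun d hd ↦ ?_) hmn s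
  · exact covariance_eq_of_identDistrib_pair
      ((identDistrib_window_pair hindep hident s 1 d).comp (hf.prodMap hg))
  · have hV (j : ℕ) : AEMeasurable (V j) μ := (hident j).aemeasurable_fst
    exact ((indepFun_window hV hindep (by omega)).comp hf hg).covariance_eq_zero (hf₂' _) (hg₂' _)

lemma integral_average_window (hindep : iIndepFun V μ)
    (hident : ∀ j, IdentDistrib (V j) (V 1) μ μ) (hf : Measurable f)
    (hf₁ : Integrable (f ∘ window V m 1) μ) (hn : n ≠ 0) (s : ℕ) :
    ∫ ω, (1 / n : ℝ) * ∑ j ∈ Finset.Icc 1 n, f (window V m (s + j) ω) ∂μ =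
      μ[f ∘ window V m 1] := by
  have hlaw (t : ℕ) : IdentDistrib (f ∘ window V m 1) (f ∘ window V m t) μ μ :=
    (identDistrib_window hindep hident 1 t).comp hf
  have hmean (t : ℕ) : ∫ ω, f (window V m t ω) ∂μ = μ[f ∘ window V m 1] := (hlaw t).integral_eq.symm
  have hint (t : ℕ) : Integrable (fun ω ↦ f (window V m t ω)) μ := (hlaw t).integrable_snd hf₁
  rw [integral_const_mul, integral_finsetSum _ fun j _ ↦ hint (s + j)]
  simp only [hmean, Finset.sum_const, Nat.card_Icc, add_tsub_cancel_right, nsmul_eq_mul]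
  field_simp

lemma integral_mul_centered_average_window (hindep : iIndepFun V μ)
    (hident : ∀ j, IdentDistrib (V j) (V 1) μ μ) (hf : Measurable f) (hg : Measurable g)
    (hf₂ : MemLp (f ∘ window V m 1) 2 μ) (hg₂ : MemLp (g ∘ window V m 1) 2 μ)
    (hn : n ≠ 0) (hmn : m ≤ n + 1) (s : ℕ) :
    ∫ ω, ((1 / n : ℝ) * ∑ j ∈ Finset.Icc 1 n, f (window V m (s + j) ω) - μ[f ∘ window V m 1]) *
        ((1 / n : ℝ) * ∑ j ∈ Finset.Icc 1 n, g (window V m (s + n + j) ω) -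
          μ[g ∘ window V m 1]) ∂μ =
      (1 / (n : ℝ) ^ 2) *
        ∑ d ∈ Finset.Icc 1 (m - 1), d * cov[f ∘ window V m 1, g ∘ window V m (1 + d); μ] := by
  have : IsProbabilityMeasure μ := hindep.isProbabilityMeasure
  rw [← integral_average_window hindep hident hf (hf₂.integrable one_le_two) hn s,
    ← integral_average_window hindep hident hg (hg₂.integrable one_le_two) hn (s + n),
    ← covariance, covariance_const_mul_left, covariance_const_mul_right,
    covariance_sum_window_adjacent_blocks hindep hident hf hg hf₂ hg₂ hmn s]
  ring

lemma integral_mul_centered_average_indicator_window (hindep : iIndepFun V μ)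
    (hident : ∀ j, IdentDistrib (V j) (V 1) μ μ) {B C : Set (Fin m → E)} (hB : MeasurableSet B)
    (hC : MeasurableSet C) (hn : n ≠ 0) (hmn : m ≤ n + 1) (s : ℕ) :
    ∫ ω, ((1 / n : ℝ) * ∑ j ∈ Finset.Icc 1 n, B.indicator 1 (window V m (s + j) ω) -
          μ.real (window V m 1 ⁻¹' B)) *
        ((1 / n : ℝ) * ∑ j ∈ Finset.Icc 1 n, C.indicator 1 (window V m (s + n + j) ω) -
          μ.real (window V m 1 ⁻¹' C)) ∂μ =
      (1 / (n : ℝ) ^ 2) * ∑ d ∈ Finset.Icc 1 (m - 1), (d : ℝ) *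
        (μ.real (window V m 1 ⁻¹' B ∩ window V m (d + 1) ⁻¹' C) -
          μ.real (window V m 1 ⁻¹' B) * μ.real (window V m 1 ⁻¹' C)) := by
  have : IsProbabilityMeasure μ := hindep.isProbabilityMeasure
  have hevent (t : ℕ) {D : Set (Fin m → E)} (hD : MeasurableSet D) :
      NullMeasurableSet (window V m t ⁻¹' D) μ :=
    (aemeasurable_window (fun j ↦ (hident j).aemeasurable_fst) t).nullMeasurableSet_preimage hD
  have hcomp (t : ℕ) (D : Set (Fin m → E)) :
      D.indicator (1 : (Fin m → E) → ℝ) ∘ window V m t = (window V m t ⁻¹' D).indicator 1 := rfl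
  have hstat (t : ℕ) : μ.real (window V m t ⁻¹' C) = μ.real (window V m 1 ⁻¹' C) :=
    congrArg ENNReal.toReal ((identDistrib_window hindep hident t 1).measure_mem_eq hC)
  have h := integral_mul_centered_average_window hindep hident (measurable_one.indicator hB)
    (measurable_one.indicator hC) (memLp_indicator_one_of_nullMeasurableSet (hevent 1 hB) 2)
    (memLp_indicator_one_of_nullMeasurableSet (hevent 1 hC) 2) hn hmn s
  simp only [hcomp, integral_indicator_one_of_nullMeasurableSet (hevent _ hB),
    integral_indicator_one_of_nullMeasurableSet (hevent _ hC),
    covariance_indicator_one (hevent _ hB) (hevent _ hC), hstat, add_comm 1] at h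
  exact h

end Windows

theorem stmt_12_general {Ω E ι : Type*} {mΩ : MeasurableSpace Ω} {mE : MeasurableSpace E}
    {μ : Measure Ω} {V : ℕ → Ω → E} (hindep : iIndepFun V μ)
    (hident : ∀ j, IdentDistrib (V j) (V 1) μ μ)
    {m n : ℕ} (hn : n ≠ 0) (hmn : m ≤ n + 1)
    (a : ι → ℝ) {f : ι → (Fin m → E) → ℝ} (hf : ∀ k, Measurable (f k))
    {R : ℕ → ι → Ω → ℝ} (hR : ∀ i k ω, R i k ω = f k (window V m i ω))
    {π : ι → ℝ} (hπ : ∀ k, π k = μ.real {ω | R 1 k ω ≤ a k})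
    {X : ℕ → ι → Ω → ℝ}
    (hX : ∀ i k ω, X i k ω = (1 / n : ℝ) * (∑ j ∈ Finset.Icc 1 n,
      if R (n * (i - 1) + j) k ω ≤ a k then (1 : ℝ) else 0) - π k)
    {i : ℕ} (hi : 1 ≤ i) (k l : ι) :
    ∫ ω, X i k ω * X (i + 1) l ω ∂μ =
      (1 / (n : ℝ) ^ 2) * ∑ d ∈ Finset.Icc 1 (m - 1), (d : ℝ) *
        (μ.real {ω | R 1 k ω ≤ a k ∧ R (d + 1) l ω ≤ a l} - π k * π l) := by
  have hevent (s : ℕ) (k : ι) : {ω | R s k ω ≤ a k} = window V m s ⁻¹' {w | f k w ≤ a k} := by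
    simp only [hR, Set.preimage_ofPred_eq]
  have hX' (i : ℕ) (k : ι) (ω : Ω) : X i k ω = (1 / n : ℝ) * ∑ j ∈ Finset.Icc 1 n,
      {w | f k w ≤ a k}.indicator 1 (window V m (n * (i - 1) + j) ω) -
        μ.real (window V m 1 ⁻¹' {w | f k w ≤ a k}) := by
    simp only [hX, hπ, hR, Set.indicator_apply, Set.mem_ofPred_eq, Pi.one_apply,
      Set.preimage_ofPred_eq]
  have hblock : n * (i + 1 - 1) = n * (i - 1) + n := by
    rw [Nat.add_sub_cancel, ← Nat.mul_succ, Nat.succ_eq_add_one, Nat.sub_add_cancel hi]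
  have hset (k : ι) : MeasurableSet {w | f k w ≤ a k} := measurableSet_le (hf k) measurable_const
  simp only [hX', hblock, Set.ofPred_and, hπ, hevent]
  exact integral_mul_centered_average_indicator_window hindep hident (hset k) (hset l) hn hmn _

/-- In the `m`-scans setting, with
`X_{i,k} = n⁻¹ Σ_{j=1}^n 1[R_{n(i−1)+j,k} ≤ a_k] − π_k`, one has for all `i ≥ 1` and all
`k, l`: `E[X_{i,k} X_{i+1,l}] = n⁻² Σ_{d=1}^{m−1} d (P(R_{1,k} ≤ a_k, R_{d+1,l} ≤ a_l) − π_k π_l)`. -/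
theorem stmt_12 {Ω : Type*} [MeasureSpace Ω] [IsProbabilityMeasure (ℙ : Measure Ω)]
    (p : ℕ) (V : ℕ → Ω → (Fin p → ℝ)) (hVmeas : ∀ j, Measurable (V j))
    (hindep : iIndepFun V ℙ)
    (hident : ∀ j, Measure.map (V j) ℙ = Measure.map (V 1) ℙ)
    (m n : ℕ) (hm : 1 ≤ m) (hmn : m < n)
    (a : Fin p → ℝ)
    (R : ℕ → Fin p → Ω → ℝ)
    (hR : ∀ i k ω, R i k ω = ∑ l ∈ Finset.range m, V (i + l) ω k)
    (π : Fin p → ℝ) (hπ : ∀ k, π k = (ℙ {ω | R 1 k ω ≤ a k}).toReal)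
    (X : ℕ → Fin p → Ω → ℝ)
    (hX : ∀ i k ω, X i k ω
      = (1 / n : ℝ) * (∑ j ∈ Finset.Icc 1 n,
          if R (n * (i - 1) + j) k ω ≤ a k then (1 : ℝ) else 0) - π k) :
    ∀ i : ℕ, 1 ≤ i → ∀ k l : Fin p,
      (∫ ω, X i k ω * X (i + 1) l ω ∂ℙ)
        = (1 / (n : ℝ) ^ 2) * ∑ d ∈ Finset.Icc 1 (m - 1), (d : ℝ) *
            ((ℙ {ω | R 1 k ω ≤ a k ∧ R (d + 1) l ω ≤ a l}).toReal - π k * π l) := by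
  have hident' (j : ℕ) : IdentDistrib (V j) (V 1) ℙ ℙ :=
    ⟨(hVmeas j).aemeasurable, (hVmeas 1).aemeasurable, hident j⟩
  have hR' (i : ℕ) (k : Fin p) (ω : Ω) : R i k ω = ∑ r, window V m i ω r k :=
    (hR i k ω).trans (Finset.sum_range fun r ↦ V (i + r) ω k)
  exact fun i hi k l ↦ stmt_12_general hindep hident' (by omega) (by omega) a
    (f := fun k w ↦ ∑ r, w r k) (fun k ↦ by fun_prop) hR' hπ hX hi k l
end

section
/- The function f is Fréchet differentiable on C([0,1],ℝ^p), its derivative at w in direction h is Df(w)[h] = η^{−1}(∫₀¹ (c² + |w−s|²(t))^{q/2} dt)^{1/q − 1} ∫₀¹ (c² + |w−s|²(t))^{q/2 − 1} ⟨(w−s)(t), h(t)⟩ dt, and sup_{w} ‖Df(w)‖ ≤ η^{−1}, where ‖Df(w)‖ is the operator norm of the continuous linear functional Df(w). -/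
open MeasureTheory

/-! The number `(∫ (c² + |w|²)^{q/2})^{1/q}` is the `L^q` norm of `(c, w)`, and for `c ≠ 0` the
integrand is a smooth function of `w`. A `C¹` map `φ` induces by postcomposition a differentiable
map of continuous functions: the points of a segment from `w x` to `w' x` are values at `x` of
functions on the segment from `w` to `w'`, so continuity of `v ↦ φ' ∘ v` in the uniform norm turns
the mean value inequality into an estimate uniform in `x`. Integrating and taking the `q`-th root
gives the derivative of the norm. For the operator bound, Cauchy–Schwarz estimates the integrand of
the derivative by `(c² + |w|²)^{(q-1)/2} ‖h‖`, and Jensen's inequality for the concave power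
`1 - 1/q` absorbs the prefactor. -/

section Superposition

variable {X E F : Type*} [TopologicalSpace X] [NormedAddCommGroup E] [NormedSpace ℝ E]

theorem exists_mem_segment_apply_eq {w w' : C(X, E)} {x : X} {y : E}
    (hy : y ∈ segment ℝ (w x) (w' x)) : ∃ v ∈ segment ℝ w w', v x = y := by
  obtain ⟨a, b, ha, hb, hab, rfl⟩ := hy
  exact ⟨a • w + b • w', ⟨a, b, ha, hb, hab, rfl⟩, rfl⟩

variable [CompactSpace X] [NormedAddCommGroup F] [NormedSpace ℝ F]

/-- Fibrewise application of a continuous field `T` of operators on a compact space, as a bounded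
operator `h ↦ (x ↦ T x (h x))` between spaces of continuous functions. -/
noncomputable def fiberwiseCLM (T : C(X, E →L[ℝ] F)) : C(X, E) →L[ℝ] C(X, F) :=
  LinearMap.mkContinuous
    { toFun := fun h => ⟨fun x => T x (h x), by fun_prop⟩
      map_add' := fun h k => ContinuousMap.ext fun x => map_add (T x) (h x) (k x)
      map_smul' := fun a h => ContinuousMap.ext fun x => map_smul (T x) a (h x) }
    ‖T‖ fun h => (ContinuousMap.norm_le _ (by positivity)).2 fun x =>
      (T x).le_of_opNorm_le_of_le (T.norm_coe_le_norm x) (h.norm_coe_le_norm x)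

theorem fiberwiseCLM_smul (a : ℝ) (T : C(X, E →L[ℝ] F)) :
    fiberwiseCLM (a • T) = a • fiberwiseCLM T := rfl

theorem hasFDerivAt_postcomp {φ : C(E, F)} {φ' : C(E, E →L[ℝ] F)}
    (hφ : ∀ y, HasFDerivAt φ (φ' y) y) (w : C(X, E)) :
    HasFDerivAt (fun v : C(X, E) => φ.comp v) (fiberwiseCLM (φ'.comp w)) w := by
  rw [hasFDerivAt_iff_isLittleO, Asymptotics.isLittleO_iff]
  intro ε hε
  have deriv_near : ∀ᶠ v in nhds w, dist (φ'.comp v) (φ'.comp w) < ε :=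
    φ'.continuous_postcomp.continuousAt.eventually (Metric.ball_mem_nhds (φ'.comp w) hε)
  obtain ⟨δ, hδ, deriv_near⟩ := Metric.eventually_nhds_iff_ball.1 deriv_near
  filter_upwards [Metric.ball_mem_nhds w hδ] with w' hw'
  refine (ContinuousMap.norm_le _ (by positivity)).2 fun x => ?_
  have deriv_close : ∀ y ∈ segment ℝ (w x) (w' x), ‖φ' y - φ' (w x)‖ ≤ ε := by
    intro y hy
    obtain ⟨v, hv, rfl⟩ := exists_mem_segment_apply_eq hy
    have hvδ := (convex_ball w δ).segment_subset (Metric.mem_ball_self hδ) hw' hv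
    rw [← dist_eq_norm]
    exact (ContinuousMap.dist_apply_le_dist (f := φ'.comp v) (g := φ'.comp w) x).trans
      (deriv_near v hvδ).le
  calc ‖φ (w' x) - φ (w x) - φ' (w x) (w' x - w x)‖ ≤ ε * ‖w' x - w x‖ :=
        (convex_segment _ _).norm_image_sub_le_of_norm_hasFDerivWithin_le'
          (fun y _ => (hφ y).hasFDerivWithinAt) deriv_close
          (left_mem_segment ℝ _ _) (right_mem_segment ℝ _ _)
    _ ≤ ε * ‖w' - w‖ := by
        gcongr
        exact (w' - w).norm_coe_le_norm x

end Superposition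

section Integral

variable {X E F : Type*} [TopologicalSpace X] [CompactSpace X] [MeasurableSpace X]
  [OpensMeasurableSpace X] [NormedAddCommGroup E] [NormedSpace ℝ E] [NormedAddCommGroup F]

theorem integrable_of_continuous (μ : Measure X) [IsFiniteMeasure μ] {g : X → F}
    (hg : Continuous g) : Integrable g μ :=
  hg.integrable_of_hasCompactSupport (HasCompactSupport.of_compactSpace g)

variable [NormedSpace ℝ F]

/-- Integration against a finite measure on a compact space, as a bounded operator on continuous
functions. -/
noncomputable def continuousMapIntegralCLM (μ : Measure X) [IsFiniteMeasure μ] :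
    C(X, F) →L[ℝ] F :=
  LinearMap.mkContinuous
    { toFun := fun g => ∫ x, g x ∂μ
      map_add' := fun g k => integral_add (integrable_of_continuous μ g.continuous)
        (integrable_of_continuous μ k.continuous)
      map_smul' := fun a g => integral_smul a g }
    (μ.real Set.univ) fun g => by
      rw [mul_comm]
      exact norm_integral_le_of_norm_le_const (.of_forall g.norm_coe_le_norm)

theorem norm_continuousMapIntegralCLM_comp_le (μ : Measure X) [IsFiniteMeasure μ]
    (T : C(X, E →L[ℝ] F)) :
    ‖(continuousMapIntegralCLM μ).comp (fiberwiseCLM T)‖ ≤ ∫ x, ‖T x‖ ∂μ := by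
  refine ContinuousLinearMap.opNorm_le_bound _ (by positivity) fun h => ?_
  rw [← integral_mul_const]
  exact norm_integral_le_of_norm_le (integrable_of_continuous μ (by fun_prop))
    (.of_forall fun x => (T x).le_opNorm_of_le (h.norm_coe_le_norm x))

end Integral

theorem integral_pos_of_forall_pos {Ω : Type*} [MeasurableSpace Ω] {μ : Measure Ω} [NeZero μ]
    {g : Ω → ℝ} (hg : ∀ x, 0 < g x) (hint : Integrable g μ) : 0 < ∫ x, g x ∂μ := by
  rw [integral_pos_iff_support_of_nonneg (fun x => (hg x).le) hint,
    Set.eq_univ_of_forall fun x => Function.mem_support.2 (hg x).ne']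
  exact Measure.measure_univ_pos.2 (NeZero.ne μ)

theorem integral_rpow_le_rpow_integral {Ω : Type*} [MeasurableSpace Ω] {μ : Measure Ω}
    [IsProbabilityMeasure μ] {g : Ω → ℝ} {r : ℝ} (hr : 0 ≤ r) (hr1 : r ≤ 1)
    (hg : 0 ≤ᵐ[μ] g) (hint : Integrable g μ) :
    ∫ x, g x ^ r ∂μ ≤ (∫ x, g x ∂μ) ^ r := by
  by_cases hpow : Integrable (fun x => g x ^ r) μ
  · exact (Real.concaveOn_rpow hr hr1).le_map_integral
      (Real.continuous_rpow_const hr).continuousOn isClosed_Ici hg hint hpow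
  · rw [integral_undef hpow]
    exact Real.rpow_nonneg (integral_nonneg_of_ae hg) r

section RegularizedPower

variable {E : Type*} [NormedAddCommGroup E] {c : ℝ}

theorem sq_add_norm_sq_pos (hc : c ≠ 0) (y : E) : 0 < c ^ 2 + ‖y‖ ^ 2 := by positivity

/-- The smooth substitute `y ↦ (c² + ‖y‖²)^r` for the power `‖y‖^{2r}` of the norm. -/
noncomputable def regularizedPower (hc : c ≠ 0) (r : ℝ) : C(E, ℝ) where
  toFun y := (c ^ 2 + ‖y‖ ^ 2) ^ r
  continuous_toFun := (by fun_prop : Continuous fun y : E => c ^ 2 + ‖y‖ ^ 2).rpow_const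
    fun y => .inl (sq_add_norm_sq_pos hc y).ne'

variable [InnerProductSpace ℝ E]

/-- The field of functionals `y ↦ (c² + ‖y‖²)^r ⟨y, ·⟩`, to which the derivatives of regularized
powers are proportional. -/
noncomputable def regularizedPowerInner (hc : c ≠ 0) (r : ℝ) : C(E, E →L[ℝ] ℝ) where
  toFun y := regularizedPower hc r y • innerSL ℝ y
  continuous_toFun := by fun_prop

theorem regularizedPowerInner_apply (hc : c ≠ 0) (r : ℝ) (y : E) :
    regularizedPowerInner hc r y = (c ^ 2 + ‖y‖ ^ 2) ^ r • innerSL ℝ y := rfl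

theorem hasFDerivAt_regularizedPower (hc : c ≠ 0) (r : ℝ) (y : E) :
    HasFDerivAt (regularizedPower hc r : C(E, ℝ))
      (((2 * r) • regularizedPowerInner hc (r - 1) : C(E, E →L[ℝ] ℝ)) y) y := by
  have h := ((hasStrictFDerivAt_norm_sq y).hasFDerivAt.const_add (c ^ 2)).rpow_const
    (p := r) (.inl (sq_add_norm_sq_pos hc y).ne')
  refine h.congr_fderiv ?_
  rw [ContinuousMap.smul_apply, regularizedPowerInner_apply, ← Nat.cast_smul_eq_nsmul ℝ, smul_smul,
    smul_smul]
  congr 1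
  push_cast
  ring

theorem norm_regularizedPowerInner_le (hc : c ≠ 0) (r : ℝ) (y : E) :
    ‖regularizedPowerInner hc r y‖ ≤ (c ^ 2 + ‖y‖ ^ 2) ^ (r + 1 / 2) := by
  have hpos := sq_add_norm_sq_pos hc y
  have norm_le_sqrt : ‖y‖ ≤ √(c ^ 2 + ‖y‖ ^ 2) :=
    Real.le_sqrt_of_sq_le (by linarith [sq_nonneg c])
  calc ‖regularizedPowerInner hc r y‖ = (c ^ 2 + ‖y‖ ^ 2) ^ r * ‖y‖ := by
        rw [regularizedPowerInner_apply, norm_smul, innerSL_apply_norm,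
          Real.norm_of_nonneg (Real.rpow_nonneg hpos.le r)]
    _ ≤ (c ^ 2 + ‖y‖ ^ 2) ^ r * √(c ^ 2 + ‖y‖ ^ 2) := by gcongr
    _ = (c ^ 2 + ‖y‖ ^ 2) ^ (r + 1 / 2) := by rw [Real.sqrt_eq_rpow, Real.rpow_add hpos]

end RegularizedPower

section RegularizedLpNorm

variable {X E : Type*} [TopologicalSpace X] [CompactSpace X] [MeasurableSpace X]
  [OpensMeasurableSpace X] [NormedAddCommGroup E] {c : ℝ} (μ : Measure X)

theorem integrable_regularizedPower_comp [IsFiniteMeasure μ] (hc : c ≠ 0) (r : ℝ) (w : C(X, E)) :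
    Integrable (fun x => (c ^ 2 + ‖w x‖ ^ 2) ^ r) μ :=
  integrable_of_continuous μ ((regularizedPower hc r).comp w).continuous

theorem integral_regularizedPower_comp_pos [IsFiniteMeasure μ] [NeZero μ] (hc : c ≠ 0) (r : ℝ)
    (w : C(X, E)) : 0 < ∫ x, (c ^ 2 + ‖w x‖ ^ 2) ^ r ∂μ :=
  integral_pos_of_forall_pos (fun x => Real.rpow_pos_of_pos (sq_add_norm_sq_pos hc (w x)) r)
    (integrable_regularizedPower_comp μ hc r w)

/-- For `q ≥ 1`, the `L^q(μ)` norm of `x ↦ (c, w x)`. Unlike the `L^q` norm of `w`, it is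
differentiable everywhere when `c ≠ 0`. -/
noncomputable def regularizedLpNorm (c q : ℝ) (w : C(X, E)) : ℝ :=
  (∫ x, (c ^ 2 + ‖w x‖ ^ 2) ^ (q / 2) ∂μ) ^ (1 / q)

variable [InnerProductSpace ℝ E]

/-- The Fréchet derivative of `regularizedLpNorm μ c q` at `w`. -/
noncomputable def regularizedLpNormFDeriv [IsFiniteMeasure μ] (hc : c ≠ 0) (q : ℝ) (w : C(X, E)) :
    C(X, E) →L[ℝ] ℝ :=
  (∫ x, (c ^ 2 + ‖w x‖ ^ 2) ^ (q / 2) ∂μ) ^ (1 / q - 1) •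
    (continuousMapIntegralCLM μ).comp
      (fiberwiseCLM ((regularizedPowerInner hc (q / 2 - 1)).comp w))

theorem regularizedLpNormFDeriv_apply [IsFiniteMeasure μ] (hc : c ≠ 0) (q : ℝ) (w h : C(X, E)) :
    regularizedLpNormFDeriv μ hc q w h =
      (∫ x, (c ^ 2 + ‖w x‖ ^ 2) ^ (q / 2) ∂μ) ^ (1 / q - 1) *
        ∫ x, (c ^ 2 + ‖w x‖ ^ 2) ^ (q / 2 - 1) * inner ℝ (w x) (h x) ∂μ := rfl

theorem hasFDerivAt_regularizedLpNorm [IsFiniteMeasure μ] [NeZero μ] (hc : c ≠ 0) {q : ℝ}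
    (hq : q ≠ 0) (w : C(X, E)) :
    HasFDerivAt (regularizedLpNorm μ c q) (regularizedLpNormFDeriv μ hc q w) w := by
  set L := (continuousMapIntegralCLM μ).comp
    (fiberwiseCLM ((regularizedPowerInner hc (q / 2 - 1)).comp w))
  have hasFDerivAt_integral :
      HasFDerivAt (fun v : C(X, E) => ∫ x, (c ^ 2 + ‖v x‖ ^ 2) ^ (q / 2) ∂μ) (q • L) w := by
    refine ((continuousMapIntegralCLM μ).hasFDerivAt.comp w
      (hasFDerivAt_postcomp (hasFDerivAt_regularizedPower hc (q / 2)) w)).congr_fderiv ?_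
    rw [ContinuousMap.smul_comp, fiberwiseCLM_smul, ContinuousLinearMap.comp_smul,
      mul_div_cancel₀ q two_ne_zero]
  refine (hasFDerivAt_integral.rpow_const (p := 1 / q)
    (.inl (integral_regularizedPower_comp_pos μ hc (q / 2) w).ne')).congr_fderiv ?_
  rw [smul_smul, mul_right_comm, one_div_mul_cancel hq, one_mul]
  rfl

theorem norm_regularizedLpNormFDeriv_le_one [IsProbabilityMeasure μ] (hc : c ≠ 0) {q : ℝ}
    (hq : 1 ≤ q) (w : C(X, E)) : ‖regularizedLpNormFDeriv μ hc q w‖ ≤ 1 := by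
  set I := ∫ x, (c ^ 2 + ‖w x‖ ^ 2) ^ (q / 2) ∂μ
  have I_pos : 0 < I := integral_regularizedPower_comp_pos μ hc (q / 2) w
  set T := (regularizedPowerInner hc (q / 2 - 1)).comp w
  have norm_T_le (x : X) : ‖T x‖ ≤ ((c ^ 2 + ‖w x‖ ^ 2) ^ (q / 2)) ^ (1 - 1 / q) := by
    have exponent_eq : q / 2 * (1 - 1 / q) = q / 2 - 1 + 1 / 2 := by field_simp; ring
    rw [← Real.rpow_mul (sq_add_norm_sq_pos hc (w x)).le, exponent_eq]
    exact norm_regularizedPowerInner_le hc _ (w x)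
  have integral_norm_T_le : ∫ x, ‖T x‖ ∂μ ≤ I ^ (1 - 1 / q) := by
    calc ∫ x, ‖T x‖ ∂μ ≤ ∫ x, ((c ^ 2 + ‖w x‖ ^ 2) ^ (q / 2)) ^ (1 - 1 / q) ∂μ := by
          refine integral_mono (integrable_of_continuous μ (by fun_prop)) ?_ norm_T_le
          simp_rw [← Real.rpow_mul (sq_add_norm_sq_pos hc (w _)).le]
          exact integrable_regularizedPower_comp μ hc _ w
      _ ≤ I ^ (1 - 1 / q) :=
          integral_rpow_le_rpow_integral (sub_nonneg.2 (div_le_one_of_le₀ hq (by positivity)))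
            (sub_le_self 1 (by positivity)) (.of_forall fun x => by positivity)
            (integrable_regularizedPower_comp μ hc (q / 2) w)
  calc ‖regularizedLpNormFDeriv μ hc q w‖
      ≤ ‖I ^ (1 / q - 1)‖ * ‖(continuousMapIntegralCLM μ).comp (fiberwiseCLM T)‖ :=
        ContinuousLinearMap.opNorm_smul_le _ _
    _ ≤ I ^ (1 / q - 1) * I ^ (1 - 1 / q) := by
        rw [Real.norm_of_nonneg (by positivity)]
        gcongr
        exact (norm_continuousMapIntegralCLM_comp_le μ T).trans integral_norm_T_le
    _ = 1 := by rw [← Real.rpow_add I_pos]; simp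

end RegularizedLpNorm

theorem stmt_15_general {X E : Type*} [TopologicalSpace X] [CompactSpace X] [MeasurableSpace X]
    [OpensMeasurableSpace X] [NormedAddCommGroup E] [InnerProductSpace ℝ E]
    (μ : Measure X) [IsProbabilityMeasure μ] (s : C(X, E)) {c η q : ℝ}
    (hc : c ≠ 0) (hη : 0 < η) (hq : 1 ≤ q) (f : C(X, E) → ℝ)
    (hf : ∀ w, f w = η⁻¹ * (∫ t, (c ^ 2 + ‖w t - s t‖ ^ 2) ^ (q / 2) ∂μ) ^ (1 / q)) :
    Differentiable ℝ f ∧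
    (∀ w h : C(X, E),
      fderiv ℝ f w h
        = η⁻¹ * (∫ t, (c ^ 2 + ‖w t - s t‖ ^ 2) ^ (q / 2) ∂μ) ^ (1 / q - 1) *
            ∫ t, (c ^ 2 + ‖w t - s t‖ ^ 2) ^ (q / 2 - 1) * inner ℝ (w t - s t) (h t) ∂μ) ∧
    (∀ w, ‖fderiv ℝ f w‖ ≤ η⁻¹) := by
  have hasFDerivAt_f (w : C(X, E)) :
      HasFDerivAt f (η⁻¹ • regularizedLpNormFDeriv μ hc q (w - s)) w := by
    rw [funext hf]
    exact ((hasFDerivAt_comp_sub s).2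
      (hasFDerivAt_regularizedLpNorm μ hc (by positivity) (w - s))).const_mul η⁻¹
  refine ⟨fun w => (hasFDerivAt_f w).differentiableAt, fun w h => ?_, fun w => ?_⟩
  · rw [(hasFDerivAt_f w).fderiv, mul_assoc]
    exact congrArg (η⁻¹ * ·) (regularizedLpNormFDeriv_apply μ hc q (w - s) h)
  · rw [(hasFDerivAt_f w).fderiv]
    calc ‖η⁻¹ • regularizedLpNormFDeriv μ hc q (w - s)‖
        ≤ ‖η⁻¹‖ * ‖regularizedLpNormFDeriv μ hc q (w - s)‖ :=
          ContinuousLinearMap.opNorm_smul_le _ _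
      _ ≤ ‖η⁻¹‖ := mul_le_of_le_one_right (norm_nonneg _)
          (norm_regularizedLpNormFDeriv_le_one μ hc hq (w - s))
      _ = η⁻¹ := Real.norm_of_nonneg (by positivity)

/-- Equip `C([0,1], ℝ^p)` with the supremum norm, fix
`s ∈ C([0,1], ℝ^p)`, `c > 0`, `η ∈ (0,1]`, `q ≥ 4`, and let
`f(w) = η⁻¹ (∫₀¹ (c² + |w(t)−s(t)|²)^{q/2} dt)^{1/q}`. Then `f` is Fréchet differentiable,
`Df(w)[h] = η⁻¹ (∫₀¹ (c²+|w−s|²)^{q/2})^{1/q−1} ∫₀¹ (c²+|w−s|²)^{q/2−1} ⟨(w−s)(t), h(t)⟩ dt`,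
and `sup_w ‖Df(w)‖ ≤ η⁻¹`. -/
theorem stmt_15 (p : ℕ) (hp : 1 ≤ p)
    (s : C(unitInterval, EuclideanSpace ℝ (Fin p)))
    (c η q : ℝ) (hc : 0 < c) (hη : 0 < η) (hη1 : η ≤ 1) (hq : 4 ≤ q)
    (f : C(unitInterval, EuclideanSpace ℝ (Fin p)) → ℝ)
    (hf : ∀ w, f w
      = η⁻¹ * (∫ t, (c ^ 2 + ‖w t - s t‖ ^ 2) ^ (q / 2)) ^ (1 / q)) :
    Differentiable ℝ f ∧
    (∀ (w h : C(unitInterval, EuclideanSpace ℝ (Fin p))),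
      fderiv ℝ f w h
        = η⁻¹ * (∫ t, (c ^ 2 + ‖w t - s t‖ ^ 2) ^ (q / 2)) ^ (1 / q - 1) *
            ∫ t, (c ^ 2 + ‖w t - s t‖ ^ 2) ^ (q / 2 - 1) *
              (inner ℝ (w t - s t) (h t) : ℝ)) ∧
    (∀ w, ‖fderiv ℝ f w‖ ≤ η⁻¹) :=
  stmt_15_general volume s hc.ne' hη (by linarith) f hf
end

section
/- The function f is three times Fréchet differentiable on C([0,1],ℝ^p) and sup_{w} ‖D³f(w)‖ ≤ 15 q² / (η c²), where ‖D³f(w)‖ = sup_{‖h‖=1} |D³f(w)[h,h,h]| is the norm of the trilinear form D³f(w). (Assume additionally q ≥ 6 so that all Hölder exponents used are admissible.) -/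
open MeasureTheory

set_option maxSynthPendingDepth 3

/-!
Write `ρ x = √(c² + |x|²)` and `N w = (∫ ρ(w t)^q dt)^{1/q}`, so that `f w = η⁻¹ N (w - s)`. Since
`ρ²` is a quadratic polynomial, `c ≤ ρ` and `|x| ≤ ρ`, the `j`-th derivative of `ρ^q` has norm at
most `j! q^j c^{1-j} ρ^{q-1}` for `j = 1, 2, 3`. These bounds survive integration, and
`∫ ρ(w t)^{q-1} dt ≤ N^{q-1}` by Jensen's inequality. The formula of Faà di Bruno for the power
`1/q` and `c ≤ N` then bound the norm of the third derivative of `N` by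
`(6 q² + 6 q (q - 1) + (q - 1) (2 q - 1)) / c² ≤ 15 q² / c²`.
-/

/-- `F` is three times Fréchet differentiable with the given successive derivatives in curried
form (`F₃ w l k h` is `D³F(w)[l, k, h]`, the outermost argument being the direction differentiated
last), and the third derivative is continuous. -/
structure HasThreeFDerivs {V W : Type*} [NormedAddCommGroup V] [NormedSpace ℝ V]
    [NormedAddCommGroup W] [NormedSpace ℝ W] (F : V → W) (F₁ : V → V →L[ℝ] W)
    (F₂ : V → V →L[ℝ] V →L[ℝ] W) (F₃ : V → V →L[ℝ] V →L[ℝ] V →L[ℝ] W) : Prop where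
  hasFDerivAt₁ : ∀ w, HasFDerivAt F (F₁ w) w
  hasFDerivAt₂ : ∀ w, HasFDerivAt F₁ (F₂ w) w
  hasFDerivAt₃ : ∀ w, HasFDerivAt F₂ (F₃ w) w
  continuous₃ : Continuous F₃

namespace HasThreeFDerivs

variable {V W : Type*} [NormedAddCommGroup V] [NormedSpace ℝ V] [NormedAddCommGroup W]
  [NormedSpace ℝ W] {F : V → W} {F₁ : V → V →L[ℝ] W} {F₂ : V → V →L[ℝ] V →L[ℝ] W}
  {F₃ : V → V →L[ℝ] V →L[ℝ] V →L[ℝ] W}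

theorem continuous₀ (H : HasThreeFDerivs F F₁ F₂ F₃) : Continuous F :=
  continuous_iff_continuousAt.2 fun w => (H.hasFDerivAt₁ w).continuousAt

theorem continuous₁ (H : HasThreeFDerivs F F₁ F₂ F₃) : Continuous F₁ :=
  continuous_iff_continuousAt.2 fun w => (H.hasFDerivAt₂ w).continuousAt

theorem continuous₂ (H : HasThreeFDerivs F F₁ F₂ F₃) : Continuous F₂ :=
  continuous_iff_continuousAt.2 fun w => (H.hasFDerivAt₃ w).continuousAt

theorem fderiv_eq (H : HasThreeFDerivs F F₁ F₂ F₃) : fderiv ℝ F = F₁ :=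
  funext fun w => (H.hasFDerivAt₁ w).fderiv

theorem fderiv_fderiv_eq (H : HasThreeFDerivs F F₁ F₂ F₃) : fderiv ℝ (fderiv ℝ F) = F₂ := by
  rw [H.fderiv_eq]
  exact funext fun w => (H.hasFDerivAt₂ w).fderiv

theorem fderiv_fderiv_fderiv_eq (H : HasThreeFDerivs F F₁ F₂ F₃) :
    fderiv ℝ (fderiv ℝ (fderiv ℝ F)) = F₃ := by
  rw [H.fderiv_fderiv_eq]
  exact funext fun w => (H.hasFDerivAt₃ w).fderiv

theorem comp_sub_const (H : HasThreeFDerivs F F₁ F₂ F₃) (s : V) :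
    HasThreeFDerivs (fun w => F (w - s)) (fun w => F₁ (w - s)) (fun w => F₂ (w - s))
      (fun w => F₃ (w - s)) where
  hasFDerivAt₁ w := (H.hasFDerivAt₁ (w - s)).comp w ((hasFDerivAt_id w).sub_const s)
  hasFDerivAt₂ w := (H.hasFDerivAt₂ (w - s)).comp w ((hasFDerivAt_id w).sub_const s)
  hasFDerivAt₃ w := (H.hasFDerivAt₃ (w - s)).comp w ((hasFDerivAt_id w).sub_const s)
  continuous₃ := H.continuous₃.comp (by fun_prop)

theorem const_smul (H : HasThreeFDerivs F F₁ F₂ F₃) (a : ℝ) :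
    HasThreeFDerivs (fun w => a • F w) (fun w => a • F₁ w) (fun w => a • F₂ w)
      (fun w => a • F₃ w) where
  hasFDerivAt₁ w := (H.hasFDerivAt₁ w).const_smul a
  hasFDerivAt₂ w := (H.hasFDerivAt₂ w).const_smul a
  hasFDerivAt₃ w := (H.hasFDerivAt₃ w).const_smul a
  continuous₃ := H.continuous₃.const_smul a

end HasThreeFDerivs

theorem integrable_continuousMap {K G : Type*} [TopologicalSpace K] [CompactSpace K]
    [MeasurableSpace K] [OpensMeasurableSpace K] [NormedAddCommGroup G] (μ : Measure K)
    [IsFiniteMeasure μ] (u : C(K, G)) : Integrable u μ :=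
  u.continuous.integrable_of_hasCompactSupport (HasCompactSupport.of_compactSpace _)

theorem integral_rpow_le_rpow_integral_rpow {α : Type*} [MeasurableSpace α] {μ : Measure α}
    [IsProbabilityMeasure μ] {u : α → ℝ} {a b : ℝ} (hu : ∀ t, 0 ≤ u t) (ha : 0 ≤ a) (hb : 0 < b)
    (hab : a ≤ b) (hua : Integrable (fun t => u t ^ a) μ) (hub : Integrable (fun t => u t ^ b) μ) :
    ∫ t, u t ^ a ∂μ ≤ (∫ t, u t ^ b ∂μ) ^ (a / b) := by
  have hθ : 0 ≤ a / b := by positivity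
  have hpow : ∀ t, (u t ^ b) ^ (a / b) = u t ^ a := fun t => by
    rw [← Real.rpow_mul (hu t), mul_div_cancel₀ a hb.ne']
  have jensen := (Real.concaveOn_rpow hθ ((div_le_one hb).2 hab)).le_map_integral
    (Real.continuous_rpow_const hθ).continuousOn isClosed_Ici
    (Filter.Eventually.of_forall fun t => Real.rpow_nonneg (hu t) b) hub
    (hua.congr (Filter.Eventually.of_forall fun t => (hpow t).symm))
  simpa only [hpow] using jensen

section FaaDiBruno

variable {V : Type*} [NormedAddCommGroup V] [NormedSpace ℝ V]

/-- The second derivative of `ψ ∘ F` at `w`, where `a₁ = ψ'(F w)`, `a₂ = ψ''(F w)`, `L = DF(w)` and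
`B = D²F(w)`. -/
noncomputable def faaDiBruno₂ (a₁ a₂ : ℝ) (L : V →L[ℝ] ℝ) (B : V →L[ℝ] V →L[ℝ] ℝ) :
    V →L[ℝ] V →L[ℝ] ℝ :=
  a₁ • B + a₂ • L.smulRight L

/-- The third derivative of `ψ ∘ F` at `w`, where `aᵢ` is the `i`-th derivative of `ψ` at `F w`,
`L = DF(w)`, `B = D²F(w)` and `T = D³F(w)`. The three summands with coefficient `a₂` send
`(l, k, h)` to `L l * B k h`, `L k * B l h` and `B l k * L h`. -/
noncomputable def faaDiBruno₃ (a₁ a₂ a₃ : ℝ) (L : V →L[ℝ] ℝ) (B : V →L[ℝ] V →L[ℝ] ℝ)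
    (T : V →L[ℝ] V →L[ℝ] V →L[ℝ] ℝ) : V →L[ℝ] V →L[ℝ] V →L[ℝ] ℝ :=
  let S := ContinuousLinearMap.smulRightL ℝ V (V →L[ℝ] ℝ)
  a₁ • T + a₂ • (L.smulRight B + (S L).comp B + (S.flip L).comp B) +
    a₃ • L.smulRight (L.smulRight L)

theorem norm_faaDiBruno₂_le (a₁ a₂ : ℝ) (L : V →L[ℝ] ℝ) (B : V →L[ℝ] V →L[ℝ] ℝ) :
    ‖faaDiBruno₂ a₁ a₂ L B‖ ≤ |a₁| * ‖B‖ + |a₂| * ‖L‖ ^ 2 := by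
  refine (norm_add_le _ _).trans_eq ?_
  simp only [norm_smul, Real.norm_eq_abs, ContinuousLinearMap.norm_smulRight_apply, sq]

theorem norm_faaDiBruno₃_le (a₁ a₂ a₃ : ℝ) (L : V →L[ℝ] ℝ) (B : V →L[ℝ] V →L[ℝ] ℝ)
    (T : V →L[ℝ] V →L[ℝ] V →L[ℝ] ℝ) :
    ‖faaDiBruno₃ a₁ a₂ a₃ L B T‖ ≤ |a₁| * ‖T‖ + 3 * |a₂| * (‖L‖ * ‖B‖) + |a₃| * ‖L‖ ^ 3 := by
  set S := ContinuousLinearMap.smulRightL ℝ V (V →L[ℝ] ℝ)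
  have hS : ‖(S L).comp B‖ ≤ ‖L‖ * ‖B‖ :=
    ContinuousLinearMap.opNorm_le_bound _ (by positivity) fun l =>
      (ContinuousLinearMap.norm_smulRight_apply L (B l)).trans_le <|
        (mul_le_mul_of_nonneg_left (B.le_opNorm l) (norm_nonneg L)).trans_eq (mul_assoc _ _ _).symm
  have hS' : ‖(S.flip L).comp B‖ ≤ ‖L‖ * ‖B‖ :=
    ContinuousLinearMap.opNorm_le_bound _ (by positivity) fun l =>
      (ContinuousLinearMap.norm_smulRight_apply (B l) L).trans_le <|
        (mul_le_mul_of_nonneg_right (B.le_opNorm l) (norm_nonneg L)).trans_eq (by ring)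
  calc ‖faaDiBruno₃ a₁ a₂ a₃ L B T‖
      ≤ ‖a₁ • T‖ + ‖a₂ • (L.smulRight B + (S L).comp B + (S.flip L).comp B)‖ +
          ‖a₃ • L.smulRight (L.smulRight L)‖ := norm_add₃_le
    _ = |a₁| * ‖T‖ + |a₂| * ‖L.smulRight B + (S L).comp B + (S.flip L).comp B‖ +
          |a₃| * ‖L‖ ^ 3 := by
        simp only [norm_smul, Real.norm_eq_abs, ContinuousLinearMap.norm_smulRight_apply]
        ring
    _ ≤ |a₁| * ‖T‖ + |a₂| * (‖L‖ * ‖B‖ + ‖L‖ * ‖B‖ + ‖L‖ * ‖B‖) + |a₃| * ‖L‖ ^ 3 := by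
        gcongr
        refine norm_add₃_le.trans ?_
        rw [ContinuousLinearMap.norm_smulRight_apply]
        gcongr
    _ = |a₁| * ‖T‖ + 3 * |a₂| * (‖L‖ * ‖B‖) + |a₃| * ‖L‖ ^ 3 := by ring

variable {F : V → ℝ} {F₁ : V → V →L[ℝ] ℝ} {F₂ : V → V →L[ℝ] V →L[ℝ] ℝ}
  {F₃ : V → V →L[ℝ] V →L[ℝ] V →L[ℝ] ℝ}

theorem HasThreeFDerivs.scomp (H : HasThreeFDerivs F F₁ F₂ F₃) {ψ ψ₁ ψ₂ ψ₃ : ℝ → ℝ} {U : Set ℝ}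
    (hU : ∀ w, F w ∈ U) (hψ : ∀ y ∈ U, HasDerivAt ψ (ψ₁ y) y)
    (hψ₁ : ∀ y ∈ U, HasDerivAt ψ₁ (ψ₂ y) y) (hψ₂ : ∀ y ∈ U, HasDerivAt ψ₂ (ψ₃ y) y)
    (hψ₃ : ContinuousOn ψ₃ U) :
    HasThreeFDerivs (fun w => ψ (F w)) (fun w => ψ₁ (F w) • F₁ w)
      (fun w => faaDiBruno₂ (ψ₁ (F w)) (ψ₂ (F w)) (F₁ w) (F₂ w))
      (fun w => faaDiBruno₃ (ψ₁ (F w)) (ψ₂ (F w)) (ψ₃ (F w)) (F₁ w) (F₂ w) (F₃ w)) := by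
  have hcomp : ∀ {φ φ' : ℝ → ℝ}, (∀ y ∈ U, HasDerivAt φ (φ' y) y) → ∀ w,
      HasFDerivAt (fun w => φ (F w)) (φ' (F w) • F₁ w) w := fun hφ w =>
    (hφ (F w) (hU w)).comp_hasFDerivAt w (H.hasFDerivAt₁ w)
  have hcont : ∀ {φ φ' : ℝ → ℝ}, (∀ y ∈ U, HasDerivAt φ (φ' y) y) →
      Continuous fun w => φ (F w) := fun hφ =>
    continuous_iff_continuousAt.2 fun w => (hcomp hφ w).continuousAt
  refine ⟨hcomp hψ, fun w => ?_, fun w => ?_, ?_⟩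
  · refine ((hcomp hψ₁ w).smul (H.hasFDerivAt₂ w)).congr_fderiv ?_
    ext k h
    simp [faaDiBruno₂, mul_assoc]
  · have hsq : HasFDerivAt (fun w => (F₁ w).smulRight (F₁ w)) _ w :=
      (ContinuousLinearMap.smulRightL ℝ V (V →L[ℝ] ℝ)).hasFDerivAt_of_bilinear
        (H.hasFDerivAt₂ w) (H.hasFDerivAt₂ w)
    refine (((hcomp hψ₁ w).smul (H.hasFDerivAt₃ w)).add
      ((hcomp hψ₂ w).smul hsq)).congr_fderiv ?_
    ext l k h
    simp only [faaDiBruno₃, ContinuousLinearMap.precompR_apply, ContinuousLinearMap.compL_apply,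
      ContinuousLinearMap.precompL_apply, ContinuousLinearMap.smulRight_apply,
      ContinuousLinearMap.smulRightL_apply_apply, ContinuousLinearMap.comp_apply,
      ContinuousLinearMap.flip_apply, add_apply, smul_apply, smul_add, smul_eq_mul]
    ring
  · let S := ContinuousLinearMap.smulRightL ℝ V (V →L[ℝ] ℝ)
    let S' := ContinuousLinearMap.smulRightL ℝ V (V →L[ℝ] V →L[ℝ] ℝ)
    have hL := H.continuous₁
    have hB := H.continuous₂
    have hLB : Continuous fun w => S' (F₁ w) (F₂ w) + S (F₁ w) ∘L F₂ w + S.flip (F₁ w) ∘L F₂ w :=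
      ((by fun_prop : Continuous fun w => S' (F₁ w) (F₂ w)).add
        ((S.continuous.comp hL).clm_comp hB)).add ((S.flip.continuous.comp hL).clm_comp hB)
    have hLLL : Continuous fun w => S' (F₁ w) (S (F₁ w) (F₁ w)) := by fun_prop
    exact (((hcont hψ₁).smul H.continuous₃).add ((hcont hψ₂).smul hLB)).add
      ((hψ₃.comp_continuous H.continuous₀ hU).smul hLLL)

theorem hasDerivAt_const_mul_rpow_div_pow (a b : ℝ) (n : ℕ) {y : ℝ} (hy : y ≠ 0) :
    HasDerivAt (fun y => a * (y ^ b / y ^ n)) (a * (b - n) * (y ^ b / y ^ (n + 1))) y := by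
  refine (((Real.hasDerivAt_rpow_const (p := b) (Or.inl hy)).fun_div (hasDerivAt_pow n y)
    (pow_ne_zero n hy)).const_mul a).congr_deriv ?_
  rw [Real.rpow_sub_one hy]
  rcases n with _ | n
  · simp only [pow_zero, CharP.cast_eq_zero, zero_add, pow_one]
    ring
  · field_simp
    simp only [Nat.cast_add, Nat.cast_one, add_tsub_cancel_right]
    ring

theorem HasThreeFDerivs.rpow_const (H : HasThreeFDerivs F F₁ F₂ F₃) (hF : ∀ w, 0 < F w) (b : ℝ) :
    HasThreeFDerivs (fun w => F w ^ b) (fun w => (b * (F w ^ b / F w)) • F₁ w)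
      (fun w => faaDiBruno₂ (b * (F w ^ b / F w)) (b * (b - 1) * (F w ^ b / F w ^ 2))
        (F₁ w) (F₂ w))
      (fun w => faaDiBruno₃ (b * (F w ^ b / F w)) (b * (b - 1) * (F w ^ b / F w ^ 2))
        (b * (b - 1) * (b - 2) * (F w ^ b / F w ^ 3)) (F₁ w) (F₂ w) (F₃ w)) := by
  refine H.scomp (U := Set.Ioi 0) (ψ := (· ^ b)) (ψ₁ := fun y => b * (y ^ b / y))
    (ψ₂ := fun y => b * (b - 1) * (y ^ b / y ^ 2))
    (ψ₃ := fun y => b * (b - 1) * (b - 2) * (y ^ b / y ^ 3)) hF (fun y hy => ?_) (fun y hy => ?_)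
    (fun y hy => ?_) ?_
  · simpa using hasDerivAt_const_mul_rpow_div_pow 1 b 0 (ne_of_gt hy)
  · simpa using hasDerivAt_const_mul_rpow_div_pow b b 1 (ne_of_gt hy)
  · simpa using hasDerivAt_const_mul_rpow_div_pow (b * (b - 1)) b 2 (ne_of_gt hy)
  · exact fun y hy => (hasDerivAt_const_mul_rpow_div_pow _ b 3
      (ne_of_gt hy)).continuousAt.continuousWithinAt

end FaaDiBruno

section IntegralOperator

variable {K : Type*} [TopologicalSpace K] [CompactSpace K] {E G W : Type*}
  [NormedAddCommGroup E] [NormedSpace ℝ E] [NormedAddCommGroup G] [NormedSpace ℝ G]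
  [NormedAddCommGroup W] [NormedSpace ℝ W]

/-- The bilinear map `(m, h) ↦ (t ↦ m t (h t))` that applies a continuous family of operators
pointwise. -/
noncomputable def pointwiseApply (K E G : Type*) [TopologicalSpace K] [CompactSpace K]
    [NormedAddCommGroup E] [NormedSpace ℝ E] [NormedAddCommGroup G] [NormedSpace ℝ G] :
    C(K, E →L[ℝ] G) →L[ℝ] C(K, E) →L[ℝ] C(K, G) :=
  LinearMap.mkContinuous₂
    (LinearMap.mk₂ ℝ (fun (m : C(K, E →L[ℝ] G)) (h : C(K, E)) =>
      (⟨fun t => m t (h t), by fun_prop⟩ : C(K, G)))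
      (by intros; ext; simp) (by intros; ext; simp) (by intros; ext; simp)
      (by intros; ext; simp)) 1 fun m h => by
    rw [one_mul, ContinuousMap.norm_le _ (by positivity)]
    exact fun t => (m t).le_of_opNorm_le_of_le (m.norm_coe_le_norm t) (h.norm_coe_le_norm t)

/-- The derivative of `w ↦ A (g ∘ w)`, as a linear function of `Dg ∘ w`; it sends `m` to
`h ↦ A (t ↦ m t (h t))`. -/
noncomputable def liftApply (A : C(K, G) →L[ℝ] W) :
    C(K, E →L[ℝ] G) →L[ℝ] C(K, E) →L[ℝ] W :=
  (ContinuousLinearMap.compL ℝ C(K, E) C(K, G) W A).comp (pointwiseApply K E G)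

-- Uniform continuity of `g'` near the compact range of `w` makes the mean value estimate uniform in
-- the parameter.
theorem hasFDerivAt_continuousMap_comp {g : C(E, G)} {g' : C(E, E →L[ℝ] G)}
    (hg : ∀ x, HasFDerivAt g (g' x) x) (w : C(K, E)) :
    HasFDerivAt (fun w : C(K, E) => g.comp w) (pointwiseApply K E G (g'.comp w)) w := by
  rw [hasFDerivAt_iff_isLittleO, Asymptotics.isLittleO_iff]
  intro ε hε
  obtain ⟨δ, hδ, hunif⟩ := Metric.mem_uniformity_dist.1 <|
    (isCompact_range w.continuous).uniformContinuousAt_of_continuousAt g'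
      (fun _ _ => g'.continuous.continuousAt) (Metric.dist_mem_uniformity hε)
  filter_upwards [Metric.ball_mem_nhds w hδ] with v hv
  rw [ContinuousMap.norm_le _ (by positivity)]
  intro t
  have hvt : v t ∈ Metric.ball (w t) δ := (ContinuousMap.dist_apply_le_dist t).trans_lt hv
  have hg' : ∀ x ∈ Metric.ball (w t) δ, ‖g' x - g' (w t)‖ ≤ ε := fun x hx => by
    rw [← dist_eq_norm, dist_comm]
    exact (hunif (Metric.mem_ball'.1 hx) ⟨t, rfl⟩).le
  calc ‖g (v t) - g (w t) - g' (w t) (v t - w t)‖ ≤ ε * ‖v t - w t‖ :=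
        (convex_ball _ _).norm_image_sub_le_of_norm_hasFDerivWithin_le'
          (fun x _ => (hg x).hasFDerivWithinAt) hg' (Metric.mem_ball_self hδ) hvt
    _ ≤ ε * ‖v - w‖ := by
        gcongr
        exact (v - w).norm_coe_le_norm t

theorem hasFDerivAt_clm_continuousMap_comp (A : C(K, G) →L[ℝ] W) {g : C(E, G)}
    {g' : C(E, E →L[ℝ] G)} (hg : ∀ x, HasFDerivAt g (g' x) x) (w : C(K, E)) :
    HasFDerivAt (fun w : C(K, E) => A (g.comp w)) (liftApply A (g'.comp w)) w :=
  A.hasFDerivAt.comp w (hasFDerivAt_continuousMap_comp hg w)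

variable [MeasurableSpace K] [OpensMeasurableSpace K] (μ : Measure K)
  [IsFiniteMeasure μ]

theorem norm_liftApply_le_integral {A : C(K, G) →L[ℝ] W} (hA : ∀ u, ‖A u‖ ≤ ∫ t, ‖u t‖ ∂μ)
    (m : C(K, E →L[ℝ] G)) : ‖liftApply A m‖ ≤ ∫ t, ‖m t‖ ∂μ := by
  refine ContinuousLinearMap.opNorm_le_bound _ (by positivity) fun h => ?_
  calc ‖A (pointwiseApply K E G m h)‖ ≤ ∫ t, ‖m t (h t)‖ ∂μ := hA _
    _ ≤ ∫ t, ‖m t‖ * ‖h‖ ∂μ :=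
        integral_mono (integrable_continuousMap μ (pointwiseApply K E G m h)).norm
          ((integrable_continuousMap μ m).norm.mul_const _)
          fun t => (m t).le_opNorm_of_le (h.norm_coe_le_norm t)
    _ = (∫ t, ‖m t‖ ∂μ) * ‖h‖ := integral_mul_const _ _

/-- Integration against `μ` as a continuous linear map on `C(K, G)`. -/
noncomputable def integralContinuousMapCLM : C(K, G) →L[ℝ] G :=
  LinearMap.mkContinuous
    { toFun := fun u => ∫ t, u t ∂μ
      map_add' := fun u v =>
        integral_add (integrable_continuousMap μ u) (integrable_continuousMap μ v)
      map_smul' := fun a u => integral_smul a u } (μ.real Set.univ) fun u => by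
    rw [mul_comm]
    exact norm_integral_le_of_norm_le_const (Filter.Eventually.of_forall u.norm_coe_le_norm)

theorem norm_integralContinuousMapCLM_apply_le (u : C(K, G)) :
    ‖integralContinuousMapCLM μ u‖ ≤ ∫ t, ‖u t‖ ∂μ :=
  norm_integral_le_integral_norm _

theorem HasThreeFDerivs.exists_integral_comp {g : E → G} {g₁ : E → E →L[ℝ] G}
    {g₂ : E → E →L[ℝ] E →L[ℝ] G} {g₃ : E → E →L[ℝ] E →L[ℝ] E →L[ℝ] G}
    (H : HasThreeFDerivs g g₁ g₂ g₃) :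
    ∃ F₁ F₂ F₃, HasThreeFDerivs (fun w : C(K, E) => ∫ t, g (w t) ∂μ) F₁ F₂ F₃ ∧
      (∀ w, ‖F₁ w‖ ≤ ∫ t, ‖g₁ (w t)‖ ∂μ) ∧ (∀ w, ‖F₂ w‖ ≤ ∫ t, ‖g₂ (w t)‖ ∂μ) ∧
      ∀ w, ‖F₃ w‖ ≤ ∫ t, ‖g₃ (w t)‖ ∂μ := by
  let γ : C(E, G) := ⟨g, H.continuous₀⟩
  let γ₁ : C(E, E →L[ℝ] G) := ⟨g₁, H.continuous₁⟩
  let γ₂ : C(E, E →L[ℝ] E →L[ℝ] G) := ⟨g₂, H.continuous₂⟩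
  let γ₃ : C(E, E →L[ℝ] E →L[ℝ] E →L[ℝ] G) := ⟨g₃, H.continuous₃⟩
  let A₀ : C(K, G) →L[ℝ] G := integralContinuousMapCLM μ
  let A₁ : C(K, E →L[ℝ] G) →L[ℝ] C(K, E) →L[ℝ] G := liftApply A₀
  let A₂ : C(K, E →L[ℝ] E →L[ℝ] G) →L[ℝ] C(K, E) →L[ℝ] C(K, E) →L[ℝ] G := liftApply A₁
  let A₃ : C(K, E →L[ℝ] E →L[ℝ] E →L[ℝ] G) →L[ℝ] C(K, E) →L[ℝ] C(K, E) →L[ℝ] C(K, E) →L[ℝ] G :=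
    liftApply A₂
  have hA₁ : ∀ m, ‖A₁ m‖ ≤ ∫ t, ‖m t‖ ∂μ :=
    norm_liftApply_le_integral μ (norm_integralContinuousMapCLM_apply_le μ)
  have hA₂ : ∀ m, ‖A₂ m‖ ≤ ∫ t, ‖m t‖ ∂μ := norm_liftApply_le_integral μ hA₁
  have hA₃ : ∀ m, ‖A₃ m‖ ≤ ∫ t, ‖m t‖ ∂μ := norm_liftApply_le_integral μ hA₂
  refine ⟨fun w => A₁ (γ₁.comp w), fun w => A₂ (γ₂.comp w), fun w => A₃ (γ₃.comp w), ?_,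
    fun w => hA₁ (γ₁.comp w), fun w => hA₂ (γ₂.comp w), fun w => hA₃ (γ₃.comp w)⟩
  exact
    { hasFDerivAt₁ := hasFDerivAt_clm_continuousMap_comp A₀ (g := γ) (g' := γ₁) H.hasFDerivAt₁
      hasFDerivAt₂ := hasFDerivAt_clm_continuousMap_comp A₁ (g := γ₁) (g' := γ₂) H.hasFDerivAt₂
      hasFDerivAt₃ := hasFDerivAt_clm_continuousMap_comp A₂ (g := γ₂) (g' := γ₃) H.hasFDerivAt₃
      continuous₃ := A₃.continuous.comp (ContinuousMap.continuous_postcomp γ₃) }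

end IntegralOperator

section SmoothNorm

variable {E : Type*} [NormedAddCommGroup E]

/-- The smooth substitute `√(c² + ‖x‖²)` for the norm. -/
noncomputable def smoothNorm (c : ℝ) (x : E) : ℝ :=
  √(c ^ 2 + ‖x‖ ^ 2)

theorem le_smoothNorm (c : ℝ) (x : E) : c ≤ smoothNorm c x :=
  Real.le_sqrt_of_sq_le (le_add_of_nonneg_right (sq_nonneg _))

theorem norm_le_smoothNorm (c : ℝ) (x : E) : ‖x‖ ≤ smoothNorm c x :=
  Real.le_sqrt_of_sq_le (le_add_of_nonneg_left (sq_nonneg _))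

theorem smoothNorm_pos {c : ℝ} (hc : 0 < c) (x : E) : 0 < smoothNorm c x :=
  hc.trans_le (le_smoothNorm c x)

theorem sq_smoothNorm (c : ℝ) (x : E) : smoothNorm c x ^ 2 = c ^ 2 + ‖x‖ ^ 2 :=
  Real.sq_sqrt (by positivity)

theorem smoothNorm_rpow (c q : ℝ) (x : E) :
    smoothNorm c x ^ q = (c ^ 2 + ‖x‖ ^ 2) ^ (q / 2) :=
  (Real.rpow_div_two_eq_sqrt q (by positivity)).symm

theorem continuous_smoothNorm (c : ℝ) : Continuous (smoothNorm c : E → ℝ) := by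
  unfold smoothNorm
  fun_prop

end SmoothNorm

section SmoothNormDerivatives

theorem abs_mul_sub_one_mul_le {b x : ℝ} (hb : 1 / 2 ≤ b) (hx : 0 ≤ x) :
    |b * (b - 1) * x| ≤ b * b * x := by
  have hb₀ : 0 ≤ b := by linarith
  have hb₁ : |b - 1| ≤ b := abs_le.2 ⟨by linarith, by linarith⟩
  rw [abs_mul, abs_mul, abs_of_nonneg hb₀, abs_of_nonneg hx]
  gcongr

variable {V : Type*} [NormedAddCommGroup V] [NormedSpace ℝ V] {L : V →L[ℝ] ℝ}
  {B : V →L[ℝ] V →L[ℝ] ℝ}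

theorem norm_faaDiBruno₂_rpow_half_le {c q r R : ℝ} (hc : 0 < c) (hq : 1 ≤ q) (hcr : c ≤ r)
    (hR : 0 ≤ R) (hL : ‖L‖ ≤ 2 * r) (hB : ‖B‖ ≤ 2) :
    ‖faaDiBruno₂ (q / 2 * (R / r ^ 2)) (q / 2 * (q / 2 - 1) * (R / (r ^ 2) ^ 2)) L B‖ ≤
      2 * q ^ 2 / c * (R / r) := by
  have : 0 < r := hc.trans_le hcr
  have ha₁ : |q / 2 * (R / r ^ 2)| = q / 2 * (R / r ^ 2) := abs_of_nonneg (by positivity)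
  have ha₂ : |q / 2 * (q / 2 - 1) * (R / (r ^ 2) ^ 2)| ≤ q / 2 * (q / 2) * (R / (r ^ 2) ^ 2) :=
    abs_mul_sub_one_mul_le (by linarith) (by positivity)
  calc _ ≤ |q / 2 * (R / r ^ 2)| * ‖B‖ +
        |q / 2 * (q / 2 - 1) * (R / (r ^ 2) ^ 2)| * ‖L‖ ^ 2 := norm_faaDiBruno₂_le _ _ _ _
    _ ≤ q / 2 * (R / r ^ 2) * 2 + q / 2 * (q / 2) * (R / (r ^ 2) ^ 2) * (2 * r) ^ 2 := by
        rw [ha₁]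
        gcongr
    _ = (q + q ^ 2) / r * (R / r) := by field_simp
    _ ≤ 2 * q ^ 2 / c * (R / r) := by
        gcongr
        nlinarith

theorem norm_faaDiBruno₃_rpow_half_le {c q r R : ℝ} (hc : 0 < c) (hq : 1 ≤ q) (hcr : c ≤ r)
    (hR : 0 ≤ R) (hL : ‖L‖ ≤ 2 * r) (hB : ‖B‖ ≤ 2) :
    ‖faaDiBruno₃ (q / 2 * (R / r ^ 2)) (q / 2 * (q / 2 - 1) * (R / (r ^ 2) ^ 2))
      (q / 2 * (q / 2 - 1) * (q / 2 - 2) * (R / (r ^ 2) ^ 3)) L B 0‖ ≤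
      6 * q ^ 3 / c ^ 2 * (R / r) := by
  have : 0 < r := hc.trans_le hcr
  have hq₁ : |q / 2 - 1| ≤ q / 2 := abs_le.2 ⟨by linarith, by linarith⟩
  have hq₂ : |q / 2 - 2| ≤ 3 * q / 2 := abs_le.2 ⟨by linarith, by linarith⟩
  have ha₂ : |q / 2 * (q / 2 - 1) * (R / (r ^ 2) ^ 2)| ≤ q / 2 * (q / 2) * (R / (r ^ 2) ^ 2) :=
    abs_mul_sub_one_mul_le (by linarith) (by positivity)
  have ha₃ : |q / 2 * (q / 2 - 1) * (q / 2 - 2) * (R / (r ^ 2) ^ 3)| ≤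
      q / 2 * (q / 2) * (3 * q / 2) * (R / (r ^ 2) ^ 3) := by
    rw [abs_mul, abs_mul, abs_mul, abs_of_nonneg (by positivity : 0 ≤ q / 2),
      abs_of_nonneg (by positivity : 0 ≤ R / (r ^ 2) ^ 3)]
    gcongr
  calc _ ≤ |q / 2 * (R / r ^ 2)| * ‖(0 : V →L[ℝ] V →L[ℝ] V →L[ℝ] ℝ)‖ +
        3 * |q / 2 * (q / 2 - 1) * (R / (r ^ 2) ^ 2)| * (‖L‖ * ‖B‖) +
        |q / 2 * (q / 2 - 1) * (q / 2 - 2) * (R / (r ^ 2) ^ 3)| * ‖L‖ ^ 3 :=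
        norm_faaDiBruno₃_le _ _ _ _ _ _
    _ ≤ 3 * (q / 2 * (q / 2) * (R / (r ^ 2) ^ 2)) * (2 * r * 2) +
        q / 2 * (q / 2) * (3 * q / 2) * (R / (r ^ 2) ^ 3) * (2 * r) ^ 3 := by
        rw [norm_zero, mul_zero, zero_add]
        gcongr
    _ = (3 * q ^ 2 + 3 * q ^ 3) / r ^ 2 * (R / r) := by
        field_simp
    _ ≤ 6 * q ^ 3 / c ^ 2 * (R / r) := by
        gcongr
        nlinarith [sq_nonneg q]

variable {E : Type*} [NormedAddCommGroup E] [InnerProductSpace ℝ E]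

theorem hasThreeFDerivs_smoothNorm_sq (c : ℝ) :
    HasThreeFDerivs (fun x : E => smoothNorm c x ^ 2) (fun x => (2 : ℝ) • innerSL ℝ x)
      (fun _ => (2 : ℝ) • innerSL ℝ) (fun _ => 0) := by
  simp only [sq_smoothNorm]
  refine ⟨fun x => ?_, fun x => (innerSL ℝ (E := E)).hasFDerivAt.const_smul (2 : ℝ),
    fun x => hasFDerivAt_const _ _, continuous_const⟩
  simpa only [two_smul] using (hasStrictFDerivAt_norm_sq x).hasFDerivAt.const_add (c ^ 2)

theorem exists_hasThreeFDerivs_smoothNorm_rpow {c q : ℝ} (hc : 0 < c) (hq : 1 ≤ q) :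
    ∃ g₁ g₂ g₃, HasThreeFDerivs (fun x : E => smoothNorm c x ^ q) g₁ g₂ g₃ ∧
      (∀ x, ‖g₁ x‖ ≤ q * smoothNorm c x ^ (q - 1)) ∧
      (∀ x, ‖g₂ x‖ ≤ 2 * q ^ 2 / c * smoothNorm c x ^ (q - 1)) ∧
      ∀ x, ‖g₃ x‖ ≤ 6 * q ^ 3 / c ^ 2 * smoothNorm c x ^ (q - 1) := by
  have hr : ∀ x : E, 0 < smoothNorm c x := smoothNorm_pos hc
  have hR : ∀ x : E, 0 ≤ smoothNorm c x ^ q := fun x => Real.rpow_nonneg (hr x).le q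
  have hpow : ∀ x : E, (smoothNorm c x ^ 2) ^ (q / 2) = smoothNorm c x ^ q := fun x => by
    rw [sq_smoothNorm, smoothNorm_rpow]
  have H := (hasThreeFDerivs_smoothNorm_sq (E := E) c).rpow_const (fun x => pow_pos (hr x) 2)
    (q / 2)
  simp only [hpow] at H
  have hL : ∀ x : E, ‖(2 : ℝ) • innerSL ℝ x‖ ≤ 2 * smoothNorm c x := fun x => by
    rw [norm_smul, innerSL_apply_norm, Real.norm_two]
    gcongr
    exact norm_le_smoothNorm c x
  have hB : ‖(2 : ℝ) • innerSL ℝ (E := E)‖ ≤ 2 := by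
    rw [norm_smul, Real.norm_two]
    exact mul_le_of_le_one_right zero_le_two (norm_innerSL_le ℝ)
  refine ⟨_, _, _, H, fun x => ?_, fun x => ?_, fun x => ?_⟩ <;> rw [Real.rpow_sub_one (hr x).ne']
  · have := hr x
    have ha : 0 ≤ q / 2 * (smoothNorm c x ^ q / smoothNorm c x ^ 2) := by positivity
    rw [norm_smul, Real.norm_of_nonneg ha]
    refine (mul_le_mul_of_nonneg_left (hL x) ha).trans_eq ?_
    field_simp
  · exact norm_faaDiBruno₂_rpow_half_le hc hq (le_smoothNorm c x) (hR x) (hL x) hB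
  · exact norm_faaDiBruno₃_rpow_half_le hc hq (le_smoothNorm c x) (hR x) (hL x) hB

end SmoothNormDerivatives

section SmoothLqNorm

/-- The `L^q(μ)` norm of the pointwise smoothed norm `√(c² + |w(t)|²)` of `w`; the function `f` of
the theorem is `η⁻¹` times its translate by `s`. -/
noncomputable def smoothLqNorm {K : Type*} [TopologicalSpace K] [MeasurableSpace K] {E : Type*}
    [NormedAddCommGroup E] (μ : Measure K) (c q : ℝ) (w : C(K, E)) : ℝ :=
  (∫ t, smoothNorm c (w t) ^ q ∂μ) ^ (1 / q)

variable {K : Type*} [TopologicalSpace K] [CompactSpace K] [MeasurableSpace K]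
  [OpensMeasurableSpace K] (μ : Measure K) [IsProbabilityMeasure μ] {E : Type*}
  [NormedAddCommGroup E] {c q : ℝ}

theorem integrable_smoothNorm_rpow (hc : 0 < c) (q : ℝ) (w : C(K, E)) :
    Integrable (fun t => smoothNorm c (w t) ^ q) μ :=
  integrable_continuousMap μ ⟨_, ((continuous_smoothNorm c).comp w.continuous).rpow_const
    fun t => Or.inl (smoothNorm_pos hc (w t)).ne'⟩

theorem rpow_le_integral_smoothNorm_rpow (hc : 0 < c) (hq : 0 ≤ q) (w : C(K, E)) :
    c ^ q ≤ ∫ t, smoothNorm c (w t) ^ q ∂μ := by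
  calc c ^ q = ∫ _, c ^ q ∂μ := by simp
    _ ≤ ∫ t, smoothNorm c (w t) ^ q ∂μ :=
        integral_mono (integrable_const _) (integrable_smoothNorm_rpow μ hc q w) fun t =>
          Real.rpow_le_rpow hc.le (le_smoothNorm c (w t)) hq

theorem integral_smoothNorm_rpow_pos (hc : 0 < c) (hq : 0 ≤ q) (w : C(K, E)) :
    0 < ∫ t, smoothNorm c (w t) ^ q ∂μ :=
  (Real.rpow_pos_of_pos hc q).trans_le (rpow_le_integral_smoothNorm_rpow μ hc hq w)

theorem le_smoothLqNorm (hc : 0 < c) (hq : 0 < q) (w : C(K, E)) : c ≤ smoothLqNorm μ c q w := by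
  calc c = (c ^ q) ^ (1 / q) := by rw [one_div, Real.rpow_rpow_inv hc.le hq.ne']
    _ ≤ smoothLqNorm μ c q w :=
        Real.rpow_le_rpow (Real.rpow_nonneg hc.le q)
          (rpow_le_integral_smoothNorm_rpow μ hc hq.le w) (by positivity)

theorem integral_smoothNorm_rpow_sub_one_le (hc : 0 < c) (hq : 1 ≤ q) (w : C(K, E)) :
    ∫ t, smoothNorm c (w t) ^ (q - 1) ∂μ ≤
      (∫ t, smoothNorm c (w t) ^ q ∂μ) / smoothLqNorm μ c q w := by
  have hq₀ : 0 < q := zero_lt_one.trans_le hq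
  calc ∫ t, smoothNorm c (w t) ^ (q - 1) ∂μ
      ≤ (∫ t, smoothNorm c (w t) ^ q ∂μ) ^ ((q - 1) / q) :=
        integral_rpow_le_rpow_integral_rpow (fun t => (smoothNorm_pos hc (w t)).le)
          (sub_nonneg.2 hq) hq₀ (sub_le_self q zero_le_one)
          (integrable_smoothNorm_rpow μ hc (q - 1) w) (integrable_smoothNorm_rpow μ hc q w)
    _ = (∫ t, smoothNorm c (w t) ^ q ∂μ) / smoothLqNorm μ c q w := by
        rw [sub_div, div_self hq₀.ne', Real.rpow_sub (integral_smoothNorm_rpow_pos μ hc hq₀.le w),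
          Real.rpow_one, smoothLqNorm]

theorem integral_norm_comp_le_of_norm_le_smoothNorm_rpow {G : Type*} [NormedAddCommGroup G]
    {k : E → G} {C : ℝ} (hc : 0 < c) (hq : 1 ≤ q) (hk : Continuous k) (hC : 0 ≤ C)
    (hkC : ∀ x, ‖k x‖ ≤ C * smoothNorm c x ^ (q - 1)) (w : C(K, E)) :
    ∫ t, ‖k (w t)‖ ∂μ ≤ C * ((∫ t, smoothNorm c (w t) ^ q ∂μ) / smoothLqNorm μ c q w) := by
  calc ∫ t, ‖k (w t)‖ ∂μ ≤ ∫ t, C * smoothNorm c (w t) ^ (q - 1) ∂μ :=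
        integral_mono (integrable_continuousMap μ ⟨_, hk.comp w.continuous⟩).norm
          ((integrable_smoothNorm_rpow μ hc (q - 1) w).const_mul C) fun t => hkC (w t)
    _ = C * ∫ t, smoothNorm c (w t) ^ (q - 1) ∂μ := integral_const_mul _ _
    _ ≤ C * ((∫ t, smoothNorm c (w t) ^ q ∂μ) / smoothLqNorm μ c q w) :=
        mul_le_mul_of_nonneg_left (integral_smoothNorm_rpow_sub_one_le μ hc hq w) hC

-- Applied with `N` the smoothed `L^q` norm and `L`, `B`, `T` the derivatives of `y = N ^ q`.
theorem norm_faaDiBruno₃_rpow_inv_le {V : Type*} [NormedAddCommGroup V] [NormedSpace ℝ V]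
    {L : V →L[ℝ] ℝ} {B : V →L[ℝ] V →L[ℝ] ℝ} {T : V →L[ℝ] V →L[ℝ] V →L[ℝ] ℝ} {y N : ℝ}
    (hc : 0 < c) (hq : 1 ≤ q) (hy : 0 < y) (hcN : c ≤ N) (hL : ‖L‖ ≤ q * (y / N))
    (hB : ‖B‖ ≤ 2 * q ^ 2 / c * (y / N)) (hT : ‖T‖ ≤ 6 * q ^ 3 / c ^ 2 * (y / N)) :
    ‖faaDiBruno₃ (1 / q * (N / y)) (1 / q * (1 / q - 1) * (N / y ^ 2))
      (1 / q * (1 / q - 1) * (1 / q - 2) * (N / y ^ 3)) L B T‖ ≤ 15 * q ^ 2 / c ^ 2 := by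
  have : 0 < N := hc.trans_le hcN
  have : 0 ≤ q - 1 := sub_nonneg.2 hq
  have : 0 ≤ 2 * q - 1 := by linarith
  have ha₁ : |1 / q * (N / y)| = 1 / q * (N / y) := abs_of_nonneg (by positivity)
  have ha₂ : |1 / q * (1 / q - 1) * (N / y ^ 2)| = (q - 1) / q ^ 2 * (N / y ^ 2) := by
    rw [show 1 / q * (1 / q - 1) = -((q - 1) / q ^ 2) by field_simp; ring, neg_mul, abs_neg,
      abs_of_nonneg (by positivity)]
  have ha₃ : |1 / q * (1 / q - 1) * (1 / q - 2) * (N / y ^ 3)| =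
      (q - 1) * (2 * q - 1) / q ^ 3 * (N / y ^ 3) := by
    rw [show 1 / q * (1 / q - 1) * (1 / q - 2) = (q - 1) * (2 * q - 1) / q ^ 3 by field_simp; ring,
      abs_of_nonneg (by positivity)]
  refine (norm_faaDiBruno₃_le _ _ _ _ _ _).trans ?_
  rw [ha₁, ha₂, ha₃]
  calc _ ≤ 1 / q * (N / y) * (6 * q ^ 3 / c ^ 2 * (y / N)) +
        3 * ((q - 1) / q ^ 2 * (N / y ^ 2)) * (q * (y / N) * (2 * q ^ 2 / c * (y / N))) +
        (q - 1) * (2 * q - 1) / q ^ 3 * (N / y ^ 3) * (q * (y / N)) ^ 3 := by gcongr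
    _ = 6 * q ^ 2 / c ^ 2 + 6 * q * (q - 1) / (c * N) + (q - 1) * (2 * q - 1) / N ^ 2 := by
        field_simp
        ring
    _ ≤ 6 * q ^ 2 / c ^ 2 + 6 * q * (q - 1) / (c * c) + (q - 1) * (2 * q - 1) / c ^ 2 := by gcongr
    _ = (6 * q ^ 2 + 6 * q * (q - 1) + (q - 1) * (2 * q - 1)) / c ^ 2 := by field_simp
    _ ≤ 15 * q ^ 2 / c ^ 2 := by
        gcongr
        nlinarith

theorem exists_hasThreeFDerivs_smoothLqNorm [InnerProductSpace ℝ E] (hc : 0 < c) (hq : 1 ≤ q) :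
    ∃ N₁ N₂ N₃, HasThreeFDerivs (smoothLqNorm μ c q : C(K, E) → ℝ) N₁ N₂ N₃ ∧
      ∀ w, ‖N₃ w‖ ≤ 15 * q ^ 2 / c ^ 2 := by
  have hq₀ : 0 < q := zero_lt_one.trans_le hq
  obtain ⟨g₁, g₂, g₃, hg, hg₁, hg₂, hg₃⟩ := exists_hasThreeFDerivs_smoothNorm_rpow (E := E) hc hq
  obtain ⟨F₁, F₂, F₃, hF, hF₁, hF₂, hF₃⟩ := hg.exists_integral_comp (K := K) μ
  refine ⟨_, _, _, hF.rpow_const (integral_smoothNorm_rpow_pos μ hc hq₀.le) (1 / q), fun w => ?_⟩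
  exact norm_faaDiBruno₃_rpow_inv_le hc hq (integral_smoothNorm_rpow_pos μ hc hq₀.le w)
    (le_smoothLqNorm μ hc hq₀ w)
    ((hF₁ w).trans <| integral_norm_comp_le_of_norm_le_smoothNorm_rpow μ hc hq
      hg.continuous₁ (by positivity) hg₁ w)
    ((hF₂ w).trans <| integral_norm_comp_le_of_norm_le_smoothNorm_rpow μ hc hq
      hg.continuous₂ (by positivity) hg₂ w)
    ((hF₃ w).trans <| integral_norm_comp_le_of_norm_le_smoothNorm_rpow μ hc hq
      hg.continuous₃ (by positivity) hg₃ w)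

end SmoothLqNorm

theorem stmt_17_general {K : Type*} [TopologicalSpace K] [CompactSpace K] [MeasurableSpace K]
    [OpensMeasurableSpace K] (μ : Measure K) [IsProbabilityMeasure μ] {E : Type*}
    [NormedAddCommGroup E] [InnerProductSpace ℝ E] (s : C(K, E)) {c η q : ℝ} (hc : 0 < c)
    (hη : 0 < η) (hq : 1 ≤ q) {f : C(K, E) → ℝ}
    (hf : ∀ w, f w = η⁻¹ * (∫ t, (c ^ 2 + ‖w t - s t‖ ^ 2) ^ (q / 2) ∂μ) ^ (1 / q)) :
    Differentiable ℝ f ∧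
    Differentiable ℝ (fderiv ℝ f) ∧
    Differentiable ℝ (fderiv ℝ (fderiv ℝ f)) ∧
    (∀ w, ‖fderiv ℝ (fderiv ℝ (fderiv ℝ f)) w‖ ≤ 15 * q ^ 2 / (η * c ^ 2)) := by
  obtain ⟨N₁, N₂, N₃, hN, hN₃⟩ := exists_hasThreeFDerivs_smoothLqNorm (E := E) μ hc hq
  have hf' : f = fun w => η⁻¹ • smoothLqNorm μ c q (w - s) := funext fun w => by
    simp only [hf, smoothLqNorm, smoothNorm_rpow, ContinuousMap.sub_apply, smul_eq_mul]
  have H := (hN.comp_sub_const s).const_smul η⁻¹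
  rw [← hf'] at H
  rw [H.fderiv_fderiv_fderiv_eq, H.fderiv_fderiv_eq, H.fderiv_eq]
  refine ⟨fun w => (H.hasFDerivAt₁ w).differentiableAt,
    fun w => (H.hasFDerivAt₂ w).differentiableAt, fun w => (H.hasFDerivAt₃ w).differentiableAt,
    fun w => ?_⟩
  calc ‖η⁻¹ • N₃ (w - s)‖ = η⁻¹ * ‖N₃ (w - s)‖ := by
        rw [norm_smul, Real.norm_of_nonneg (inv_nonneg.2 hη.le)]
    _ ≤ η⁻¹ * (15 * q ^ 2 / c ^ 2) := by gcongr; exact hN₃ _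
    _ = 15 * q ^ 2 / (η * c ^ 2) := by field_simp

/-- With `f(w) = η⁻¹ (∫₀¹ (c² + |w(t)−s(t)|²)^{q/2} dt)^{1/q}` on
`C([0,1], ℝ^p)` (sup norm), `c > 0`, `η ∈ (0,1]`, `q ≥ 4` (and additionally `q ≥ 6` so that
all Hölder exponents used are admissible), the function `f` is three times Fréchet
differentiable and `sup_w ‖D³f(w)‖ ≤ 15 q² / (η c²)`. -/
theorem stmt_17 (p : ℕ) (hp : 1 ≤ p)
    (s : C(unitInterval, EuclideanSpace ℝ (Fin p)))
    (c η q : ℝ) (hc : 0 < c) (hη : 0 < η) (hη1 : η ≤ 1) (hq : 4 ≤ q) (hq6 : 6 ≤ q)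
    (f : C(unitInterval, EuclideanSpace ℝ (Fin p)) → ℝ)
    (hf : ∀ w, f w
      = η⁻¹ * (∫ t, (c ^ 2 + ‖w t - s t‖ ^ 2) ^ (q / 2)) ^ (1 / q)) :
    Differentiable ℝ f ∧
    Differentiable ℝ (fderiv ℝ f) ∧
    Differentiable ℝ (fderiv ℝ (fderiv ℝ f)) ∧
    (∀ w, ‖fderiv ℝ (fderiv ℝ (fderiv ℝ f)) w‖ ≤ 15 * q ^ 2 / (η * c ^ 2)) :=
  stmt_17_general volume s hc hη (by linarith) hf
end
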